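/- arXiv:1110.5369 — 2 statements merged into one kernel-verified Lean document; each statement's English description precedes it below -/
import Mathlib

section
/- Suppose the hyperplanes H_1,…,H_n are pairwise distinct. Let 𝒜' = 𝒜 ∖ {H_1} and let 𝒜'' be the arrangement in the affine subspace H_1 whose hyperplanes are the distinct nonempty intersections H_i ∩ H_1 (2 ≤ i ≤ n, H_i ∩ H_1 ≠ ∅), each defined by the restricted affine map ω_i|_{H_1}. Then for every k ≥ 0, dim_ℚ B(𝒜)_k = dim_ℚ B(𝒜')_k + dim_ℚ B(𝒜'')_{k−1}, where B(−)_k denotes the degree-k graded component (grading by total degree in the generators e_i); equivalently, Poin(B(𝒜)) = Poin(B(𝒜')) + t²·Poin(B(𝒜'')) when each generator is placed in degree 2. -/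
/-!
Write `𝒜'` and `𝒜''` for the deletion and the restriction of `𝒜` at a hyperplane `H₀` with
generator `e₀`, and `ch` for the number of chambers. The recursion is an inequality in each degree
that a count of chambers forces to be an equality.

*Upper bound* (`bdim_le`). The relations of `𝒜'` hold for `𝒜`, so `B(𝒜')` maps to `B(𝒜)`.
Multiplication by `e₀` induces a map from `B(𝒜'')`, shifted by one degree, onto the quotient of
`B(𝒜)` by the image of `B(𝒜')`. It is well defined because a region that is empty on `H₀` is, by
convexity, empty on one side of `H₀`; the relation (3) obtained by adding `H₀` with that sign is
`± e₀` times the given relation plus a polynomial without `e₀`. It is onto because hyperplanes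
with the same trace on `H₀` have the same product with `e₀` up to sign, modulo the image of
`B(𝒜')`. Hence `dim B(𝒜)ₖ ≤ dim B(𝒜')ₖ + dim B(𝒜'')ₖ₋₁`.

*Lower bound* (`card_chambers_le_sum_bdim`). The functions on the set of chambers form the
Varchenko–Gelfand ring, generated by the Heaviside functions `x_H` and filtered by degree in them.
If the region `(S⁺, S⁻)` is empty, then `∏_{S⁺} x_H ∏_{S⁻} (x_H - 1) = 0`; if moreover the
hyperplanes have a common point, reflecting in it shows that the opposite region is empty too, and
the difference of the two vanishing products has relation (3) as leading part, up to sign.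
Hyperplanes without a common point leave one of their sign regions empty, which gives relation (2).
So the associated graded ring is a quotient of `B(𝒜)` and `ch(𝒜) ≤ dim B(𝒜)`.

*Comparison* (`bdim_eq`). Since `ch(𝒜') + ch(𝒜'') ≤ ch(𝒜)`, the upper bound and induction on the
number of hyperplanes give `dim B(𝒜) ≤ ch(𝒜)`. Then
`ch(𝒜) ≤ dim B(𝒜) ≤ dim B(𝒜') + dim B(𝒜'') ≤ ch(𝒜') + ch(𝒜'') ≤ ch(𝒜)`, so no inequality of the
upper bound is strict. The arrangements live in affine subspaces `E` of a fixed space, given by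
affine functions of the whole space, so that restriction only changes `E` and the index set.
-/

/-!
Statement 5: deletion–restriction recursion for the Poincaré polynomial of `B(𝒜)`.
-/

open MvPolynomial Set

variable {V : Type*} [NormedAddCommGroup V] [NormedSpace ℝ V] [FiniteDimensional ℝ V]

/-- The hyperplane `H i`. -/
def Hyp {n : ℕ} (ω : Fin n → V →ᵃ[ℝ] ℝ) (i : Fin n) : Set V := {v | ω i v = 0}

/-- The open positive half-space `H i⁺`. -/
def Hplus {n : ℕ} (ω : Fin n → V →ᵃ[ℝ] ℝ) (i : Fin n) : Set V := {v | 0 < ω i v}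

/-- The open negative half-space `H i⁻`. -/
def Hminus {n : ℕ} (ω : Fin n → V →ᵃ[ℝ] ℝ) (i : Fin n) : Set V := {v | ω i v < 0}

/-- Family (1) of the Cordovil ideal: `e i ^ 2`. -/
def bFam1 (ι : Type*) : Set (MvPolynomial ι ℚ) := {p | ∃ i : ι, p = X i ^ 2}

/-- Family (2): `∏_{i∈S} e i` whenever `⋂_{i∈S} Z i = ∅`. -/
def bFam2 {ι W : Type*} (Z : ι → Set W) : Set (MvPolynomial ι ℚ) :=
  {p | ∃ S : Finset ι, (⋂ i ∈ S, Z i) = ∅ ∧ p = ∏ i ∈ S, X i}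

/-- Family (3): `Σ_{k∈S⁻} (∏_{i∈S⁺} e i · ∏_{j∈S⁻, j≠k} e j) -
Σ_{k∈S⁺} (∏_{i∈S⁺, i≠k} e i · ∏_{j∈S⁻} e j)` for disjoint `S⁺, S⁻` with
`⋂_{i∈S⁺} Z⁺ i ∩ ⋂_{j∈S⁻} Z⁻ j = ∅` and `⋂_{i∈S⁺∪S⁻} Z i ≠ ∅`. -/
def bFam3 {ι W : Type*} [DecidableEq ι] (Z Zp Zm : ι → Set W) :
    Set (MvPolynomial ι ℚ) :=
  {p | ∃ Sp Sm : Finset ι, Disjoint Sp Sm ∧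
    (⋂ i ∈ Sp, Zp i) ∩ (⋂ j ∈ Sm, Zm j) = ∅ ∧
    (⋂ i ∈ (Sp ∪ Sm : Finset ι), Z i) ≠ ∅ ∧
    p = (∑ k ∈ Sm, ((∏ i ∈ Sp, X i) * ∏ j ∈ Sm.erase k, X j)) -
      ∑ k ∈ Sp, ((∏ i ∈ Sp.erase k, X i) * ∏ j ∈ Sm, X j)}

/-- The ideal `𝓘₀` defining the algebra `B(𝒜)`; the arrangement is recorded through its
hyperplanes `Z i` and open half-spaces `Zp i`, `Zm i`. -/
noncomputable def bIdeal {ι W : Type*} [DecidableEq ι] (Z Zp Zm : ι → Set W) :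
    Ideal (MvPolynomial ι ℚ) :=
  Ideal.span (bFam1 ι ∪ bFam2 Z ∪ bFam3 Z Zp Zm)

/-- The algebra `B(𝒜) = ℚ[e_H : H ∈ 𝒜] / 𝓘₀`. -/
abbrev BAlg {ι W : Type*} [DecidableEq ι] (Z Zp Zm : ι → Set W) :=
  MvPolynomial ι ℚ ⧸ bIdeal Z Zp Zm

/-- The degree-`k` graded component of `B(𝒜)` (grading by total degree in the
generators): the image of the homogeneous polynomials of degree `k`. -/
noncomputable def bGrade {ι W : Type*} [DecidableEq ι] (Z Zp Zm : ι → Set W) (k : ℕ) :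
    Submodule ℚ (BAlg Z Zp Zm) :=
  Submodule.map (Ideal.Quotient.mkₐ ℚ (bIdeal Z Zp Zm)).toLinearMap
    (MvPolynomial.homogeneousSubmodule ι ℚ k)

/-- The index type of the restricted arrangement `𝒜'' = 𝒜^{H₁}`: the distinct nonempty
intersections `H i ∩ H 0` for `i ≠ 0`. -/
def restIdx {n : ℕ} (ω : Fin (n + 1) → V →ᵃ[ℝ] ℝ) : Type _ :=
  {s : Set V // s.Nonempty ∧ ∃ i : Fin (n + 1), i ≠ 0 ∧ s = Hyp ω i ∩ Hyp ω 0}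

noncomputable instance {n : ℕ} (ω : Fin (n + 1) → V →ᵃ[ℝ] ℝ) :
    DecidableEq (restIdx ω) := Classical.decEq _

namespace DelRest

/-! ### Linear algebra and homogeneous ideals -/

section Linear

/-- Modulo `W`, the image of `N` under `T` is a quotient of its image under `π` as soon as `T`
sends the part of `N` killed by `π` into `W`. -/
lemma finrank_sup_map_le {P Q R : Type*} [AddCommGroup P] [Module ℚ P] [AddCommGroup Q]
    [Module ℚ Q] [AddCommGroup R] [Module ℚ R] (π : P →ₗ[ℚ] Q) (T : P →ₗ[ℚ] R)
    (N : Submodule ℚ P) (hN : N.FG) (W : Submodule ℚ R) [FiniteDimensional ℚ W]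
    (h : ∀ u ∈ N, π u = 0 → T u ∈ W) (X : Submodule ℚ R) (hX : X ≤ W ⊔ N.map T) :
    Module.finrank ℚ X ≤ Module.finrank ℚ W + Module.finrank ℚ (N.map π) := by
  have : FiniteDimensional ℚ (N.map π) := Module.Finite.iff_fg.2 (hN.map π)
  have hs : Function.Surjective (π.submoduleMap N) := π.submoduleMap_surjective N
  obtain ⟨s, hs'⟩ := (π.submoduleMap N).exists_rightInverse_of_surjective
    (LinearMap.range_eq_top.2 hs)
  let g : N.map π →ₗ[ℚ] R := T ∘ₗ N.subtype ∘ₗ s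
  have hle : X ≤ W ⊔ LinearMap.range g := by
    refine hX.trans (sup_le le_sup_left ?_)
    rintro _ ⟨u, hu, rfl⟩
    have h1 : π u = π (s (π.submoduleMap N ⟨u, hu⟩)) := by
      have := LinearMap.congr_fun hs' (π.submoduleMap N ⟨u, hu⟩)
      exact (congrArg Subtype.val this).symm
    have h2 := h (u - s (π.submoduleMap N ⟨u, hu⟩)) (N.sub_mem hu (s _).2)
      (by rw [map_sub, ← h1, sub_self])
    rw [map_sub] at h2
    have h3 : T u = (T u - T (s (π.submoduleMap N ⟨u, hu⟩))) + g (π.submoduleMap N ⟨u, hu⟩) := by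
      simp [g]
    rw [h3]
    exact Submodule.add_mem_sup h2 ⟨_, rfl⟩
  calc Module.finrank ℚ X ≤ Module.finrank ℚ (W ⊔ LinearMap.range g : Submodule ℚ R) :=
        Submodule.finrank_mono hle
    _ ≤ Module.finrank ℚ W + Module.finrank ℚ (LinearMap.range g) :=
        Submodule.finrank_add_le_finrank_add_finrank _ _
    _ ≤ _ := Nat.add_le_add_left (LinearMap.finrank_range_le g) _

/-- A homogeneous element of an ideal with homogeneous generators lies in every subspace that
contains the multiples of the generators of the same degree by homogeneous polynomials. -/
lemma mem_of_mem_span_homog {σ : Type*} (G : Set (MvPolynomial σ ℚ)) (k : ℕ)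
    (N : Submodule ℚ (MvPolynomial σ ℚ))
    (hG : ∀ p ∈ G, ∃ d, p.IsHomogeneous d ∧
      ∀ (m : MvPolynomial σ ℚ) (e : ℕ), m.IsHomogeneous e → e + d = k → m * p ∈ N)
    (f : MvPolynomial σ ℚ) (hf : f ∈ Ideal.span G) (hk : f.IsHomogeneous k) : f ∈ N := by
  have key : ∀ a : MvPolynomial σ ℚ, homogeneousComponent k (a * f) ∈ N := by
    clear hk
    induction hf using Submodule.span_induction with
    | mem p hp =>
      intro a
      obtain ⟨d, hd, h⟩ := hG p hp
      rw [← sum_homogeneousComponent a, Finset.sum_mul, map_sum]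
      refine N.sum_mem fun j _ => ?_
      have hj := homogeneousComponent_isHomogeneous j a
      have hm : homogeneousComponent j a * p ∈ homogeneousSubmodule σ ℚ (j + d) := hj.mul hd
      rw [homogeneousComponent_of_mem hm]
      split_ifs with hjd
      · exact h _ j hj hjd.symm
      · exact N.zero_mem
    | zero => intro a; simp
    | add x y _ _ hx hy => intro a; rw [mul_add, map_add]; exact N.add_mem (hx a) (hy a)
    | smul b x _ hx => intro a; rw [smul_eq_mul, ← mul_assoc]; exact hx _
  have := key 1
  rwa [one_mul, homogeneousComponent_eq_self hk] at this

end Linear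

/-! ### Affine subspaces and half-spaces -/

section Geometry

variable {U : Type*} [AddCommGroup U] [Module ℝ U]

/-- `E` is closed under affine combinations; a nonempty such set is an affine subspace. -/
def Flat (E : Set U) : Prop :=
  ∀ (c : ℝ) (p q w : U), p ∈ E → q ∈ E → w ∈ E → c • (p - q) + w ∈ E

lemma aff_apply (f : U →ᵃ[ℝ] ℝ) (c : ℝ) (p q w : U) :
    f (c • (p - q) + w) = c * (f p - f q) + f w := by
  have h := f.map_vadd w (c • (p - q))
  have h2 := f.linearMap_vsub p q
  simp only [vadd_eq_add, vsub_eq_sub, map_smul, smul_eq_mul] at h h2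
  rw [h, h2]

lemma Flat.inter {E : Set U} (hE : Flat E) (f : U →ᵃ[ℝ] ℝ) : Flat {v | v ∈ E ∧ f v = 0} := by
  rintro c p q w ⟨hp, hp'⟩ ⟨hq, hq'⟩ ⟨hw, hw'⟩
  exact ⟨hE c p q w hp hq hw, by rw [aff_apply, hp', hq', hw']; ring⟩

/-- A segment joining the two sides of a hyperplane meets it at an interior point. -/
lemma Flat.cross {E : Set U} (hE : Flat E) (f : U →ᵃ[ℝ] ℝ) {u v : U} (hu : u ∈ E) (hv : v ∈ E)
    (h1 : f u < 0) (h2 : 0 < f v) : ∃ x ∈ E, f x = 0 ∧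
      ∀ g : U →ᵃ[ℝ] ℝ, (0 < g u → 0 < g v → 0 < g x) ∧ (g u < 0 → g v < 0 → g x < 0) ∧
        (g u = 0 → g v = 0 → g x = 0) := by
  have hd : 0 < f v - f u := by linarith
  refine ⟨(- f u / (f v - f u)) • (v - u) + u, hE _ _ _ _ hv hu hu, ?_, fun g => ?_⟩
  · rw [aff_apply]; field_simp; ring
  · have hg : g ((- f u / (f v - f u)) • (v - u) + u) * (f v - f u)
        = f v * g u + (- f u) * g v := by
      rw [aff_apply]; field_simp; ring
    have h1' : 0 < - f u := by linarith
    refine ⟨fun a b => ?_, fun a b => ?_, fun a b => ?_⟩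
    · refine pos_of_mul_pos_left (b := f v - f u) ?_ hd.le
      rw [hg]; positivity
    · have := mul_pos h2 (neg_pos.2 a)
      have := mul_pos h1' (neg_pos.2 b)
      by_contra hc
      have := mul_nonneg (not_lt.1 hc) hd.le
      nlinarith
    · rw [a, b] at hg
      have : g ((- f u / (f v - f u)) • (v - u) + u) * (f v - f u) = 0 := by rw [hg]; ring
      exact (mul_eq_zero.1 this).resolve_right hd.ne'

/-- If all `2 ^ |S|` open regions cut out by the hyperplanes in `S` are nonempty, then these
hyperplanes have a common point: an affine subspace meeting every open orthant contains `0`. -/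
lemma Flat.exists_common_zero {ι : Type*} [DecidableEq ι] (ω : ι → U →ᵃ[ℝ] ℝ) (S : Finset ι) :
    ∀ {E : Set U}, Flat E →
    (∀ c : ι → Bool, ∃ v ∈ E, ∀ i ∈ S, (c i = true → 0 < ω i v) ∧ (c i = false → ω i v < 0)) →
    ∃ v ∈ E, ∀ i ∈ S, ω i v = 0 := by
  induction S using Finset.induction_on with
  | empty =>
    intro E _ h
    obtain ⟨v, hv, -⟩ := h fun _ => true
    exact ⟨v, hv, by simp⟩
  | insert a S ha ih =>
    intro E hE h
    obtain ⟨v, ⟨hv, hv0⟩, hv'⟩ := ih (hE.inter (ω a)) (by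
      intro c
      obtain ⟨x, hx, hx'⟩ := h (Function.update c a false)
      obtain ⟨y, hy, hy'⟩ := h (Function.update c a true)
      obtain ⟨z, hz, hz0, hz'⟩ := hE.cross (ω a) hx hy
        ((hx' a (Finset.mem_insert_self _ _)).2 (by simp))
        ((hy' a (Finset.mem_insert_self _ _)).1 (by simp))
      refine ⟨z, ⟨hz, hz0⟩, fun i hi => ?_⟩
      have hia : i ≠ a := fun e => ha (e ▸ hi)
      have h1 := hx' i (Finset.mem_insert_of_mem hi)
      have h2 := hy' i (Finset.mem_insert_of_mem hi)
      rw [Function.update_of_ne hia] at h1 h2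
      exact ⟨fun e => (hz' _).1 (h1.1 e) (h2.1 e), fun e => (hz' _).2.1 (h1.2 e) (h2.2 e)⟩)
    refine ⟨v, hv, fun i hi => ?_⟩
    rcases Finset.mem_insert.1 hi with rfl | hi
    · exact hv0
    · exact hv' i hi

/-- A point of a hyperplane that is off finitely many others can be moved to either side of it
without changing sides of the others. -/
lemma Flat.perturb {ι : Type*} [Finite ι] {E : Set U} (hE : Flat E) (f : U →ᵃ[ℝ] ℝ)
    (g : ι → U →ᵃ[ℝ] ℝ) {u w : U} (hu : u ∈ E) (hw : w ∈ E) (hfu : f u = 0) (hfw : f w ≠ 0)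
    (hg : ∀ i, g i u ≠ 0) :
    (∃ x ∈ E, 0 < f x ∧ ∀ i, g i x ≠ 0 ∧ (0 < g i x ↔ 0 < g i u)) ∧
    (∃ x ∈ E, f x < 0 ∧ ∀ i, g i x ≠ 0 ∧ (0 < g i x ↔ 0 < g i u)) := by
  have hev : ∀ᶠ t : ℝ in nhds 0, ∀ i, g i (t • (w - u) + u) ≠ 0 ∧
      (0 < g i (t • (w - u) + u) ↔ 0 < g i u) := by
    rw [Filter.eventually_all]
    intro i
    have hc : Filter.Tendsto (fun t : ℝ => t * (g i w - g i u) + g i u) (nhds 0)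
        (nhds (g i u)) := by
      have : Continuous (fun t : ℝ => t * (g i w - g i u) + g i u) := by fun_prop
      simpa using this.tendsto 0
    rcases lt_or_gt_of_ne (hg i) with h | h
    · filter_upwards [hc.eventually_lt_const h] with t ht
      rw [aff_apply]
      exact ⟨ht.ne, by constructor <;> intro <;> linarith⟩
    · filter_upwards [hc.eventually_const_lt h] with t ht
      rw [aff_apply]
      exact ⟨ht.ne', by constructor <;> intro <;> linarith⟩
  obtain ⟨ε, hε, hball⟩ := Metric.eventually_nhds_iff.1 hev
  have hpos : ∀ s : ℝ, |s| = ε / 2 → ∃ x ∈ E, f x = s * f w ∧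
      ∀ i, g i x ≠ 0 ∧ (0 < g i x ↔ 0 < g i u) := by
    intro s hs
    refine ⟨s • (w - u) + u, hE _ _ _ _ hw hu hu, by rw [aff_apply, hfu]; ring,
      hball ?_⟩
    rw [Real.dist_eq, sub_zero, hs]; linarith
  have hε2 : 0 < ε / 2 := by linarith
  obtain ⟨x, hx, hx1, hx2⟩ := hpos (ε / 2) (abs_of_pos hε2)
  obtain ⟨y, hy, hy1, hy2⟩ := hpos (-(ε / 2)) (by rw [abs_neg, abs_of_pos hε2])
  rcases lt_or_gt_of_ne hfw with h | h
  · exact ⟨⟨y, hy, by rw [hy1]; nlinarith, hy2⟩, ⟨x, hx, by rw [hx1]; nlinarith, hx2⟩⟩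
  · exact ⟨⟨x, hx, by rw [hx1]; nlinarith, hx2⟩, ⟨y, hy, by rw [hy1]; nlinarith, hy2⟩⟩

/-- Two hyperplanes of an affine subspace, one contained in the other, coincide. -/
lemma Flat.hyperplane_le {E : Set U} (hE : Flat E) (f g : U →ᵃ[ℝ] ℝ)
    (hf : ∃ p ∈ E, f p = 0) (hg : ∃ w ∈ E, g w ≠ 0)
    (h : ∀ v ∈ E, f v = 0 → g v = 0) : ∀ v ∈ E, g v = 0 → f v = 0 := by
  intro q hq hgq
  by_contra hfq
  obtain ⟨p, hp, hfp⟩ := hf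
  obtain ⟨w, hw, hgw⟩ := hg
  have := h _ (hE (f w / f q) p q w hp hq hw) (by rw [aff_apply, hfp]; field_simp; ring)
  rw [aff_apply, h p hp hfp, hgq] at this
  exact hgw (by linarith)

end Geometry

/-! ### The ideal of an arrangement in an affine subspace -/

section Arrangement

variable {U : Type*} [AddCommGroup U] [Module ℝ U] {ι : Type*}

/-- The hyperplane `ω i = 0` inside the affine subspace `E`. -/
def zer (E : Set U) (ω : ι → U →ᵃ[ℝ] ℝ) (i : ι) : Set U := {v | v ∈ E ∧ ω i v = 0}

/-- The open half-space `ω i > 0` of `E`. -/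
def pos (E : Set U) (ω : ι → U →ᵃ[ℝ] ℝ) (i : ι) : Set U := {v | v ∈ E ∧ 0 < ω i v}

/-- The open half-space `ω i < 0` of `E`. -/
def neg (E : Set U) (ω : ι → U →ᵃ[ℝ] ℝ) (i : ι) : Set U := {v | v ∈ E ∧ ω i v < 0}

lemma iInter_zer_eq_empty {E : Set U} (hE : E.Nonempty) (ω : ι → U →ᵃ[ℝ] ℝ) (S : Finset ι) :
    (⋂ i ∈ S, zer E ω i) = ∅ ↔ ¬ ∃ v ∈ E, ∀ i ∈ S, ω i v = 0 := by
  rw [← not_iff_not, not_not, ← ne_eq, ← Set.nonempty_iff_ne_empty]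
  constructor
  · rintro ⟨v, hv⟩
    simp only [Set.mem_iInter] at hv
    rcases S.eq_empty_or_nonempty with rfl | ⟨a, ha⟩
    · obtain ⟨e, he⟩ := hE
      exact ⟨e, he, by simp⟩
    · exact ⟨v, (hv a ha).1, fun i hi => (hv i hi).2⟩
  · rintro ⟨v, hv, h⟩
    exact ⟨v, by simp only [Set.mem_iInter]; exact fun i hi => ⟨hv, h i hi⟩⟩

lemma iInter_pos_neg_eq_empty {E : Set U} (hE : E.Nonempty) (ω : ι → U →ᵃ[ℝ] ℝ)
    (Sp Sm : Finset ι) : (⋂ i ∈ Sp, pos E ω i) ∩ (⋂ j ∈ Sm, neg E ω j) = ∅ ↔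
      ¬ ∃ v ∈ E, (∀ i ∈ Sp, 0 < ω i v) ∧ ∀ j ∈ Sm, ω j v < 0 := by
  rw [← not_iff_not, not_not, ← ne_eq, ← Set.nonempty_iff_ne_empty]
  constructor
  · rintro ⟨v, hv, hv'⟩
    simp only [Set.mem_iInter] at hv hv'
    rcases Sp.eq_empty_or_nonempty with rfl | ⟨a, ha⟩
    · rcases Sm.eq_empty_or_nonempty with rfl | ⟨a, ha⟩
      · obtain ⟨e, he⟩ := hE
        exact ⟨e, he, by simp⟩
      · exact ⟨v, (hv' a ha).1, by simp, fun i hi => (hv' i hi).2⟩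
    · exact ⟨v, (hv a ha).1, fun i hi => (hv i hi).2, fun i hi => (hv' i hi).2⟩
  · rintro ⟨v, hv, h, h'⟩
    refine ⟨v, ?_, ?_⟩ <;> simp only [Set.mem_iInter]
    · exact fun i hi => ⟨hv, h i hi⟩
    · exact fun i hi => ⟨hv, h' i hi⟩

variable [DecidableEq ι]

/-- The polynomial of family (3) attached to the pair `(Sp, Sm)`. -/
noncomputable def rel3 (Sp Sm : Finset ι) : MvPolynomial ι ℚ :=
  (∑ k ∈ Sm, ((∏ i ∈ Sp, X i) * ∏ j ∈ Sm.erase k, X j)) -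
      ∑ k ∈ Sp, ((∏ i ∈ Sp.erase k, X i) * ∏ j ∈ Sm, X j)

/-- The ideal `𝓘₀` of the arrangement `ω` in `E`. -/
noncomputable abbrev idl (E : Set U) (ω : ι → U →ᵃ[ℝ] ℝ) : Ideal (MvPolynomial ι ℚ) :=
  bIdeal (zer E ω) (pos E ω) (neg E ω)

/-- The dimension of the degree-`k` component of the algebra of the arrangement `ω` in `E`. -/
noncomputable def bdim (E : Set U) (ω : ι → U →ᵃ[ℝ] ℝ) (k : ℕ) : ℕ :=
  Module.finrank ℚ (bGrade (zer E ω) (pos E ω) (neg E ω) k)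

lemma sq_mem_idl (E : Set U) (ω : ι → U →ᵃ[ℝ] ℝ) (i : ι) : X i ^ 2 ∈ idl E ω :=
  Ideal.subset_span (Or.inl (Or.inl ⟨i, rfl⟩))

lemma prod_mem_idl {E : Set U} (hE : E.Nonempty) (ω : ι → U →ᵃ[ℝ] ℝ) (S : Finset ι)
    (h : ¬ ∃ v ∈ E, ∀ i ∈ S, ω i v = 0) : ∏ i ∈ S, X i ∈ idl E ω :=
  Ideal.subset_span (Or.inl (Or.inr ⟨S, (iInter_zer_eq_empty hE ω S).2 h, rfl⟩))

lemma rel3_mem_idl {E : Set U} (hE : E.Nonempty) (ω : ι → U →ᵃ[ℝ] ℝ) (Sp Sm : Finset ι)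
    (hd : Disjoint Sp Sm) (h : ¬ ∃ v ∈ E, (∀ i ∈ Sp, 0 < ω i v) ∧ ∀ j ∈ Sm, ω j v < 0)
    (hc : ∃ v ∈ E, ∀ i ∈ Sp ∪ Sm, ω i v = 0) : rel3 Sp Sm ∈ idl E ω := by
  refine Ideal.subset_span (Or.inr ⟨Sp, Sm, hd, (iInter_pos_neg_eq_empty hE ω Sp Sm).2 h, ?_, rfl⟩)
  rw [ne_eq, iInter_zer_eq_empty hE]
  exact not_not.2 hc

lemma prod_X_homog (S : Finset ι) : (∏ i ∈ S, X i : MvPolynomial ι ℚ).IsHomogeneous S.card := by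
  have := IsHomogeneous.prod S (fun i => (X i : MvPolynomial ι ℚ)) (fun _ => 1)
    (fun i _ => isHomogeneous_X ℚ i)
  simpa using this

lemma rel3_homog (Sp Sm : Finset ι) : (rel3 Sp Sm).IsHomogeneous (Sp.card + Sm.card - 1) := by
  refine IsHomogeneous.sub (IsHomogeneous.sum _ _ _ fun k hk => ?_)
    (IsHomogeneous.sum _ _ _ fun k hk => ?_)
  · have h := (prod_X_homog Sp).mul (prod_X_homog (Sm.erase k))
    have := Finset.card_pos.2 ⟨k, hk⟩
    rw [Finset.card_erase_of_mem hk] at h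
    rwa [show Sp.card + (Sm.card - 1) = Sp.card + Sm.card - 1 by omega] at h
  · have h := (prod_X_homog (Sp.erase k)).mul (prod_X_homog Sm)
    have := Finset.card_pos.2 ⟨k, hk⟩
    rw [Finset.card_erase_of_mem hk] at h
    rwa [show Sp.card - 1 + Sm.card = Sp.card + Sm.card - 1 by omega] at h

/-- A homogeneous element of the ideal lies in any subspace containing the relevant homogeneous
multiples of the three families of generators. -/
lemma mem_of_mem_idl {E : Set U} (hE : E.Nonempty) (ω : ι → U →ᵃ[ℝ] ℝ) (k : ℕ)
    (N : Submodule ℚ (MvPolynomial ι ℚ))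
    (h1 : ∀ i, ∀ (m : MvPolynomial ι ℚ) (e : ℕ), m.IsHomogeneous e → e + 2 = k → m * X i ^ 2 ∈ N)
    (h2 : ∀ S : Finset ι, (¬ ∃ v ∈ E, ∀ i ∈ S, ω i v = 0) → ∀ (m : MvPolynomial ι ℚ) (e : ℕ),
      m.IsHomogeneous e → e + S.card = k → m * ∏ i ∈ S, X i ∈ N)
    (h3 : ∀ Sp Sm : Finset ι, Disjoint Sp Sm →
      (¬ ∃ v ∈ E, (∀ i ∈ Sp, 0 < ω i v) ∧ ∀ j ∈ Sm, ω j v < 0) →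
      (∃ v ∈ E, ∀ i ∈ Sp ∪ Sm, ω i v = 0) → ∀ (m : MvPolynomial ι ℚ) (e : ℕ),
      m.IsHomogeneous e → e + (Sp.card + Sm.card) = k + 1 → m * rel3 Sp Sm ∈ N)
    (f : MvPolynomial ι ℚ) (hf : f ∈ idl E ω) (hk : f.IsHomogeneous k) : f ∈ N := by
  refine mem_of_mem_span_homog _ k N ?_ f hf hk
  rintro p ((⟨i, rfl⟩ | ⟨S, hS, rfl⟩) | ⟨Sp, Sm, hd, h, hc, rfl⟩)
  · exact ⟨2, isHomogeneous_X_pow i 2, h1 i⟩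
  · exact ⟨S.card, prod_X_homog S, h2 S ((iInter_zer_eq_empty hE ω S).1 hS)⟩
  · refine ⟨_, rel3_homog Sp Sm, fun m e hm he => ?_⟩
    rw [iInter_pos_neg_eq_empty hE] at h
    rw [ne_eq, iInter_zer_eq_empty hE, not_not] at hc
    refine h3 Sp Sm hd h hc m e hm ?_
    -- The empty pair has nonempty region `E`, so the truncated subtraction is genuine.
    have : Sp.card + Sm.card ≠ 0 := by
      intro h0
      obtain ⟨h01, h02⟩ := Nat.add_eq_zero_iff.1 h0
      rw [Finset.card_eq_zero] at h01 h02
      subst h01 h02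
      obtain ⟨v, hv⟩ := hE
      exact h ⟨v, hv, by simp⟩
    omega

lemma rel3_insert_left {a : ι} {Sp Sm : Finset ι} (ha : a ∉ Sp) :
    rel3 (insert a Sp) Sm = X a * rel3 Sp Sm - (∏ i ∈ Sp, X i) * ∏ j ∈ Sm, X j := by
  have h : ∑ k ∈ Sp, ((∏ i ∈ (insert a Sp).erase k, X i) * ∏ j ∈ Sm, (X j : MvPolynomial ι ℚ))
      = X a * ∑ k ∈ Sp, ((∏ i ∈ Sp.erase k, X i) * ∏ j ∈ Sm, X j) := by
    rw [Finset.mul_sum]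
    refine Finset.sum_congr rfl fun k hk => ?_
    rw [Finset.erase_insert_of_ne (by rintro rfl; exact ha hk),
      Finset.prod_insert (fun h => ha (Finset.mem_of_mem_erase h)), mul_assoc]
  have h' : ∑ k ∈ Sm, ((∏ i ∈ insert a Sp, X i) * ∏ j ∈ Sm.erase k, (X j : MvPolynomial ι ℚ))
      = X a * ∑ k ∈ Sm, ((∏ i ∈ Sp, X i) * ∏ j ∈ Sm.erase k, X j) := by
    rw [Finset.mul_sum]
    refine Finset.sum_congr rfl fun k hk => ?_
    rw [Finset.prod_insert ha, mul_assoc]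
  rw [rel3, Finset.sum_insert ha, Finset.erase_insert ha, h, h', rel3]
  ring

lemma rel3_swap (Sp Sm : Finset ι) : rel3 Sm Sp = - rel3 Sp Sm := by
  rw [rel3, rel3, neg_sub]
  congr 1 <;> exact Finset.sum_congr rfl fun _ _ => mul_comm _ _

lemma rel3_insert_right {a : ι} {Sp Sm : Finset ι} (ha : a ∉ Sm) :
    rel3 Sp (insert a Sm) = X a * rel3 Sp Sm + (∏ i ∈ Sp, X i) * ∏ j ∈ Sm, X j := by
  rw [rel3_swap, rel3_insert_left ha, rel3_swap]
  ring

lemma rename_rel3 {κ : Type*} [DecidableEq κ] {ρ : κ → ι} (hρ : Function.Injective ρ)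
    (Sp Sm : Finset κ) : rename ρ (rel3 Sp Sm) = rel3 (Sp.image ρ) (Sm.image ρ) := by
  have hp : ∀ S : Finset κ, ∏ i ∈ S.image ρ, (X i : MvPolynomial ι ℚ) = ∏ i ∈ S, X (ρ i) :=
    fun S => Finset.prod_image fun _ _ _ _ h => hρ h
  have hs : ∀ (S : Finset κ) (f : ι → MvPolynomial ι ℚ),
      ∑ i ∈ S.image ρ, f i = ∑ i ∈ S, f (ρ i) :=
    fun S f => Finset.sum_image fun _ _ _ _ h => hρ h
  simp only [rel3, hs, ← Finset.image_erase hρ, hp, map_sub, map_sum, map_mul, map_prod, rename_X]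

end Arrangement

/-! ### The Varchenko–Gelfand ring bounds the total dimension from below -/

section LowerBound

variable {ι : Type*}

/-- The polynomials of degree less than `k`. -/
noncomputable def lowDeg (ι : Type*) : ℕ → Submodule ℚ (MvPolynomial ι ℚ)
  | 0 => ⊥
  | k + 1 => lowDeg ι k ⊔ homogeneousSubmodule ι ℚ k

lemma lowDeg_mono : Monotone (lowDeg ι) := monotone_nat_of_le_succ fun _ => le_sup_left

lemma mem_lowDeg_of_homog {f : MvPolynomial ι ℚ} {e k : ℕ} (hf : f.IsHomogeneous e) (h : e < k) :
    f ∈ lowDeg ι k :=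
  lowDeg_mono (Nat.succ_le_of_lt h) (Submodule.mem_sup_right (S := lowDeg ι e) hf)

lemma mul_mem_lowDeg {m : MvPolynomial ι ℚ} {e : ℕ} (hm : m.IsHomogeneous e) (k : ℕ) :
    ∀ f ∈ lowDeg ι k, m * f ∈ lowDeg ι (e + k) := by
  induction k with
  | zero =>
    intro f hf
    rw [(Submodule.mem_bot ℚ).1 hf, mul_zero]
    exact Submodule.zero_mem _
  | succ k ih =>
    intro f hf
    obtain ⟨a, ha, b, hb, rfl⟩ := Submodule.mem_sup.1 hf
    rw [mul_add]
    exact Submodule.add_mem _ (lowDeg_mono (by omega) (ih a ha))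
      (mem_lowDeg_of_homog (hm.mul hb) (by omega))

variable [DecidableEq ι]

/-- The negative of the degree `|S| - 1` part of `∏_{i ∈ S} (X i - c i)`. -/
noncomputable def subTop (S : Finset ι) (c : ι → ℚ) : MvPolynomial ι ℚ :=
  ∑ k ∈ S, C (c k) * ∏ i ∈ S.erase k, X i

lemma subTop_mem (S : Finset ι) (c : ι → ℚ) : subTop S c ∈ lowDeg ι S.card := by
  refine Submodule.sum_mem _ fun k hk => mem_lowDeg_of_homog (((prod_X_homog _)).C_mul _) ?_
  exact Finset.card_erase_lt_of_mem hk

lemma prod_sub_C_expand (c : ι → ℚ) (S : Finset ι) :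
    ∃ r ∈ lowDeg ι (S.card - 1),
      ∏ i ∈ S, (X i - C (c i)) = ∏ i ∈ S, X i - subTop S c + r := by
  induction S using Finset.induction_on with
  | empty => exact ⟨0, Submodule.zero_mem _, by simp [subTop]⟩
  | insert a S ha ih =>
    obtain ⟨r, hr, h⟩ := ih
    have hsub : subTop (insert a S) c = C (c a) * ∏ i ∈ S, X i + X a * subTop S c := by
      rw [subTop, Finset.sum_insert ha, Finset.erase_insert ha, subTop, Finset.mul_sum]
      congr 1
      refine Finset.sum_congr rfl fun k hk => ?_
      rw [Finset.erase_insert_of_ne (by rintro rfl; exact ha hk),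
        Finset.prod_insert (fun h => ha (Finset.mem_of_mem_erase h))]
      ring
    refine ⟨X a * r + C (c a) * subTop S c - C (c a) * r, ?_, ?_⟩
    · rw [Finset.card_insert_of_notMem ha, Nat.add_sub_cancel]
      simp only [← smul_eq_C_mul]
      refine Submodule.sub_mem _ (Submodule.add_mem _ ?_ (Submodule.smul_mem _ _ (subTop_mem S c)))
        (Submodule.smul_mem _ _ (lowDeg_mono (by omega) hr))
      rcases S.eq_empty_or_nonempty with rfl | hS
      · rw [(Submodule.mem_bot ℚ).1 hr, mul_zero]
        exact Submodule.zero_mem _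
      · have := mul_mem_lowDeg (isHomogeneous_X ℚ a) _ r hr
        have hc := hS.card_pos
        rwa [show 1 + (S.card - 1) = S.card by omega] at this
    · rw [Finset.prod_insert ha, h, hsub, Finset.prod_insert ha]
      ring

lemma prod_sub_C_mem (c : ι → ℚ) (S : Finset ι) :
    ∏ i ∈ S, (X i - C (c i)) ∈ lowDeg ι (S.card + 1) := by
  obtain ⟨r, hr, h⟩ := prod_sub_C_expand c S
  rw [h]
  exact Submodule.add_mem _ (Submodule.sub_mem _
    (mem_lowDeg_of_homog (prod_X_homog S) (Nat.lt_succ_self _))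
    (lowDeg_mono (Nat.le_succ _) (subTop_mem S c))) (lowDeg_mono (by omega) hr)

/-- The constant subtracted from `X i` to encode the side `b` of the hyperplane: the factor
`X i - off b` takes the value `0` on the opposite side. -/
def off (b : Bool) : ℚ := if b then 0 else 1

lemma subTop_union_left {Sp Sm : Finset ι} (hd : Disjoint Sp Sm) :
    subTop (Sp ∪ Sm) (fun i => off (decide (i ∈ Sp))) =
      ∑ k ∈ Sm, ((∏ i ∈ Sp, X i) * ∏ j ∈ Sm.erase k, X j) := by
  rw [subTop, Finset.sum_union hd, Finset.sum_eq_zero, zero_add]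
  · refine Finset.sum_congr rfl fun k hk => ?_
    have hk' : k ∉ Sp := fun h => Finset.disjoint_left.1 hd h hk
    rw [Finset.erase_union_distrib, Finset.erase_eq_of_notMem hk', Finset.prod_union
      (Finset.disjoint_of_subset_right (Finset.erase_subset _ _) hd)]
    simp [off, hk']
  · intro k hk
    simp [off, hk]

lemma subTop_union_right {Sp Sm : Finset ι} (hd : Disjoint Sp Sm) :
    subTop (Sp ∪ Sm) (fun i => off (decide (i ∈ Sm))) =
      ∑ k ∈ Sp, ((∏ i ∈ Sp.erase k, X i) * ∏ j ∈ Sm, X j) := by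
  rw [Finset.union_comm, subTop_union_left hd.symm]
  exact Finset.sum_congr rfl fun _ _ => mul_comm _ _

variable {U : Type*} [AddCommGroup U] [Module ℝ U]

/-- The chambers of the arrangement `ω` in `E`, recorded by their sign vectors
(`true` for the positive side). -/
def chambers {ι : Type*} (E : Set U) (ω : ι → U →ᵃ[ℝ] ℝ) : Set (ι → Bool) :=
  {σ | ∃ v ∈ E, ∀ i, ω i v ≠ 0 ∧ (σ i = true ↔ 0 < ω i v)}

/-- Evaluation of polynomials at the Heaviside functions `σ ↦ [σ i = +]` on the set of chambers;
its target is the Varchenko–Gelfand ring. -/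
noncomputable def heaviside {ι : Type*} (E : Set U) (ω : ι → U →ᵃ[ℝ] ℝ) :
    MvPolynomial ι ℚ →ₐ[ℚ] (chambers E ω → ℚ) :=
  aeval fun i σ => if σ.1 i then 1 else 0

lemma heaviside_prod_apply (E : Set U) (ω : ι → U →ᵃ[ℝ] ℝ) (S : Finset ι) (c : ι → Bool)
    (σ : chambers E ω) : heaviside E ω (∏ i ∈ S, (X i - C (off (c i)))) σ =
      ∏ i ∈ S, ((if σ.1 i then 1 else 0) - off (c i)) := by
  simp only [heaviside, map_prod, map_sub, aeval_X, Finset.prod_apply, Pi.sub_apply, algHom_C]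
  rfl

/-- An empty open region gives a vanishing product in the Varchenko–Gelfand ring. -/
lemma heaviside_prod_eq_zero (E : Set U) (ω : ι → U →ᵃ[ℝ] ℝ) (S : Finset ι) (c : ι → Bool)
    (h : ¬ ∃ v ∈ E, ∀ i ∈ S, (c i = true → 0 < ω i v) ∧ (c i = false → ω i v < 0)) :
    heaviside E ω (∏ i ∈ S, (X i - C (off (c i)))) = 0 := by
  ext ⟨σ, v, hv, hσ⟩
  rw [heaviside_prod_apply]
  have : ∃ i ∈ S, σ i ≠ c i := by
    by_contra! hcon
    refine h ⟨v, hv, fun i hi => ⟨fun hc => ?_, fun hc => ?_⟩⟩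
    · exact (hσ i).2.1 ((hcon i hi).trans hc)
    · refine lt_of_le_of_ne (not_lt.1 fun hlt => ?_) (hσ i).1
      have h1 := (hσ i).2.2 hlt
      rw [hcon i hi, hc] at h1
      exact absurd h1 (by decide)
  obtain ⟨i, hi, hne⟩ := this
  refine Finset.prod_eq_zero hi ?_
  change (if σ i then 1 else 0) - off (c i) = 0
  revert hne
  cases σ i <;> cases c i <;> simp [off]

/-- The relations of `B` hold in the Varchenko–Gelfand ring up to terms of lower degree. -/
lemma heaviside_mem_of_mem_idl {E : Set U} (hF : Flat E) (hE : E.Nonempty) (ω : ι → U →ᵃ[ℝ] ℝ)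
    (k : ℕ) (f : MvPolynomial ι ℚ) (hf : f ∈ idl E ω) (hk : f.IsHomogeneous k) :
    heaviside E ω f ∈ (lowDeg ι k).map (heaviside E ω).toLinearMap := by
  have key : f ∈ ((lowDeg ι k).map (heaviside E ω).toLinearMap).comap
      (heaviside E ω).toLinearMap := by
    refine mem_of_mem_idl hE ω k _ ?_ ?_ ?_ f hf hk
    · intro i m e hm he
      refine ⟨m * X i, mem_lowDeg_of_homog (hm.mul (isHomogeneous_X ℚ i)) (by omega), ?_⟩
      ext σ
      simp only [AlgHom.toLinearMap_apply, map_mul, map_pow, Pi.mul_apply, Pi.pow_apply]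
      simp [heaviside]
    · intro S hS m e hm he
      have : ∃ c : ι → Bool, ¬ ∃ v ∈ E, ∀ i ∈ S,
          (c i = true → 0 < ω i v) ∧ (c i = false → ω i v < 0) := by
        by_contra hcon
        exact hS (hF.exists_common_zero ω S fun c => not_not.1 fun h => hcon ⟨c, h⟩)
      obtain ⟨c, hc⟩ := this
      have h0 := heaviside_prod_eq_zero E ω S c hc
      obtain ⟨r, hr, h⟩ := prod_sub_C_expand (fun i => off (c i)) S
      refine ⟨m * (subTop S (fun i => off (c i)) - r), ?_, ?_⟩
      · rw [← he]
        exact mul_mem_lowDeg hm _ _ (Submodule.sub_mem _ (subTop_mem _ _)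
          (lowDeg_mono (Nat.sub_le _ _) hr))
      · rw [h, map_add, map_sub] at h0
        simp only [AlgHom.toLinearMap_apply, map_mul, map_sub]
        congr 1
        linear_combination -h0
    · intro Sp Sm hd hr hc m e hm he
      have hcard : (Sp ∪ Sm).card = Sp.card + Sm.card := Finset.card_union_of_disjoint hd
      have hne : (Sp ∪ Sm).card ≠ 0 := by
        rw [Finset.card_ne_zero, Finset.nonempty_iff_ne_empty]
        intro h0
        obtain ⟨h1, h2⟩ := Finset.union_eq_empty.1 h0
        subst h1 h2
        obtain ⟨v, hv⟩ := hE
        exact hr ⟨v, hv, by simp⟩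
      have h1 := heaviside_prod_eq_zero E ω (Sp ∪ Sm) (fun i => decide (i ∈ Sp)) (by
        rintro ⟨v, hv, h⟩
        refine hr ⟨v, hv, fun i hi => (h i (Finset.mem_union_left _ hi)).1 (by simpa using hi),
          fun j hj => (h j (Finset.mem_union_right _ hj)).2 ?_⟩
        simpa using fun h => Finset.disjoint_left.1 hd h hj)
      -- Reflecting in a common point of the hyperplanes, the opposite region is empty as well.
      have h2 := heaviside_prod_eq_zero E ω (Sp ∪ Sm) (fun i => decide (i ∈ Sm)) (by
        rintro ⟨v, hv, h⟩
        obtain ⟨z, hz, hz0⟩ := hc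
        refine hr ⟨(1 : ℝ) • (z - v) + z, hF 1 z v z hz hv hz, fun i hi => ?_, fun j hj => ?_⟩
        · have h1 := (h i (Finset.mem_union_left _ hi)).2
            (by simpa using fun h => Finset.disjoint_left.1 hd hi h)
          rw [aff_apply, hz0 i (Finset.mem_union_left _ hi)]
          linarith
        · have h1 := (h j (Finset.mem_union_right _ hj)).1 (by simpa using hj)
          rw [aff_apply, hz0 j (Finset.mem_union_right _ hj)]
          linarith)
      obtain ⟨r1, hr1, e1⟩ := prod_sub_C_expand (fun i => off (decide (i ∈ Sp))) (Sp ∪ Sm)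
      obtain ⟨r2, hr2, e2⟩ := prod_sub_C_expand (fun i => off (decide (i ∈ Sm))) (Sp ∪ Sm)
      refine ⟨m * (r1 - r2), ?_, ?_⟩
      · rw [show k = e + ((Sp ∪ Sm).card - 1) by omega]
        exact mul_mem_lowDeg hm _ _ (Submodule.sub_mem _ hr1 hr2)
      · rw [e1, subTop_union_left hd, map_add, map_sub] at h1
        rw [e2, subTop_union_right hd, map_add, map_sub] at h2
        simp only [AlgHom.toLinearMap_apply, map_mul (heaviside E ω), map_sub (heaviside E ω), rel3]
        congr 1
        linear_combination h1 - h2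
  exact key

/-- Polynomials of degree at most the number of hyperplanes give all functions on the chambers: the
product of one linear factor per hyperplane is supported on a single chamber. -/
lemma map_lowDeg_eq_top [Fintype ι] (E : Set U) (ω : ι → U →ᵃ[ℝ] ℝ) {K : ℕ}
    (hK : Fintype.card ι < K) : (lowDeg ι K).map (heaviside E ω).toLinearMap = ⊤ := by
  classical
  rw [eq_top_iff]
  intro g _
  rw [← Finset.univ_sum_single g]
  refine Submodule.sum_mem _ fun σ _ => ?_
  have hq := prod_sub_C_mem (fun i => off (σ.1 i)) Finset.univ
  set q := ∏ i ∈ Finset.univ, (X i - C (off (σ.1 i))) with hqdef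
  have hq1 : heaviside E ω q σ ≠ 0 := by
    rw [hqdef, heaviside_prod_apply, Finset.prod_ne_zero_iff]
    intro i _
    cases σ.1 i <;> simp [off]
  have hq2 : ∀ τ, τ ≠ σ → heaviside E ω q τ = 0 := by
    intro τ hτ
    have : ∃ i, τ.1 i ≠ σ.1 i := by
      by_contra! hcon
      exact hτ (Subtype.ext (funext hcon))
    obtain ⟨i, hi⟩ := this
    rw [hqdef, heaviside_prod_apply]
    refine Finset.prod_eq_zero (Finset.mem_univ i) ?_
    revert hi
    cases τ.1 i <;> cases σ.1 i <;> simp [off]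
  have : Pi.single σ (g σ) = (g σ / heaviside E ω q σ) • heaviside E ω q := by
    ext τ
    by_cases hτ : τ = σ
    · subst hτ
      simp [hq1]
    · simp [hτ, hq2 τ hτ]
  rw [this]
  refine Submodule.smul_mem _ _ ⟨q, lowDeg_mono ?_ hq, rfl⟩
  rw [Finset.card_univ]
  exact hK

/-- The total dimension of `B` is at least the number of chambers: filtering the functions on the
chambers by degree in the Heaviside functions, each graded piece is a quotient of that of `B`. -/
lemma card_chambers_le_sum_bdim [Fintype ι] {E : Set U} (hF : Flat E) (hE : E.Nonempty)
    (ω : ι → U →ᵃ[ℝ] ℝ) {K : ℕ} (hK : Fintype.card ι < K) :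
    Nat.card (chambers E ω) ≤ ∑ k ∈ Finset.range K, bdim E ω k := by
  have : Fintype (chambers E ω) := Fintype.ofFinite _
  have step : ∀ K, Module.finrank ℚ ((lowDeg ι K).map (heaviside E ω).toLinearMap) ≤
      ∑ k ∈ Finset.range K, bdim E ω k := by
    intro K
    induction K with
    | zero => rw [lowDeg, Submodule.map_bot, finrank_bot]; exact Nat.zero_le _
    | succ K ih =>
      rw [Finset.sum_range_succ]
      refine le_trans (finrank_sup_map_le (Ideal.Quotient.mkₐ ℚ (idl E ω)).toLinearMap
        (heaviside E ω).toLinearMap (homogeneousSubmodule ι ℚ K) (homogeneousSubmodule_fg _ _ K)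
        ((lowDeg ι K).map (heaviside E ω).toLinearMap) ?_ _ ?_) (Nat.add_le_add_right ih _)
      · intro u hu h0
        exact heaviside_mem_of_mem_idl hF hE ω K u (Ideal.Quotient.eq_zero_iff_mem.1 h0) hu
      · rw [lowDeg, Submodule.map_sup]
  have := step K
  rwa [map_lowDeg_eq_top E ω hK, finrank_top, Module.finrank_fintype_fun_eq_card,
    ← Nat.card_eq_fintype_card] at this

end LowerBound

/-! ### Deletion and restriction -/

section Restriction

variable {U : Type*} [AddCommGroup U] [Module ℝ U] {ι κ : Type*}

/-- An arrangement of pairwise distinct hyperplanes in the affine subspace `E`. -/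
structure IsArr (E : Set U) (ω : ι → U →ᵃ[ℝ] ℝ) : Prop where
  flat : Flat E
  nonempty : E.Nonempty
  exists_zero : ∀ i, ∃ v ∈ E, ω i v = 0
  exists_ne : ∀ i, ∃ v ∈ E, ω i v ≠ 0
  distinct : ∀ i j, (∀ v ∈ E, ω i v = 0 ↔ ω j v = 0) → i = j

/-- `ρ` selects, for each nonempty intersection of a hyperplane `i ≠ i₀` with the hyperplane `i₀`,
exactly one hyperplane having that intersection. -/
structure IsRestr (E : Set U) (ω : ι → U →ᵃ[ℝ] ℝ) (i₀ : ι) (ρ : κ → ι) : Prop where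
  ne : ∀ s, ρ s ≠ i₀
  exists_zero : ∀ s, ∃ v ∈ E, ω i₀ v = 0 ∧ ω (ρ s) v = 0
  surj : ∀ i, i ≠ i₀ → (∃ v ∈ E, ω i₀ v = 0 ∧ ω i v = 0) →
    ∃ s, ∀ v ∈ E, ω i₀ v = 0 → (ω i v = 0 ↔ ω (ρ s) v = 0)
  distinct : ∀ s t, (∀ v ∈ E, ω i₀ v = 0 → (ω (ρ s) v = 0 ↔ ω (ρ t) v = 0)) → s = t

/-- The deleted arrangement. -/
def del (ω : ι → U →ᵃ[ℝ] ℝ) (i₀ : ι) : {i // i ≠ i₀} → U →ᵃ[ℝ] ℝ := fun i => ω i.1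

/-- The hyperplane `i₀` as the ambient affine subspace of the restricted arrangement. -/
def base (E : Set U) (ω : ι → U →ᵃ[ℝ] ℝ) (i₀ : ι) : Set U := {v | v ∈ E ∧ ω i₀ v = 0}

lemma IsRestr.injective {E : Set U} {ω : ι → U →ᵃ[ℝ] ℝ} {i₀ : ι} {ρ : κ → ι}
    (hR : IsRestr E ω i₀ ρ) : Function.Injective ρ :=
  fun s t h => hR.distinct s t fun v _ _ => by rw [h]

lemma IsArr.del {E : Set U} {ω : ι → U →ᵃ[ℝ] ℝ} (h : IsArr E ω) (i₀ : ι) :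
    IsArr E (del ω i₀) where
  flat := h.flat
  nonempty := h.nonempty
  exists_zero i := h.exists_zero i.1
  exists_ne i := h.exists_ne i.1
  distinct i j hij := Subtype.ext (h.distinct i.1 j.1 hij)

lemma IsArr.restr {E : Set U} {ω : ι → U →ᵃ[ℝ] ℝ} (h : IsArr E ω) {i₀ : ι} {ρ : κ → ι}
    (hR : IsRestr E ω i₀ ρ) : IsArr (base E ω i₀) (ω ∘ ρ) where
  flat := h.flat.inter _
  nonempty := h.exists_zero i₀
  exists_zero s := by
    obtain ⟨v, hv, h0, h1⟩ := hR.exists_zero s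
    exact ⟨v, ⟨hv, h0⟩, h1⟩
  exists_ne s := by
    by_contra! hcon
    refine hR.ne s (h.distinct _ _ fun v hv => ⟨?_, fun h0 => hcon v ⟨hv, h0⟩⟩)
    exact h.flat.hyperplane_le (ω i₀) (ω (ρ s)) (h.exists_zero i₀) (h.exists_ne _)
      (fun v hv h0 => hcon v ⟨hv, h0⟩) v hv
  distinct s t hst := hR.distinct s t fun v hv h0 => hst v ⟨hv, h0⟩

/-- The chambers of `𝒜` are those of `𝒜'`, except that each one cut by the hyperplane `i₀` counts
twice; every chamber of `𝒜''` comes from one that is cut. -/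
lemma card_chambers_add_le [Finite ι] {E : Set U} {ω : ι → U →ᵃ[ℝ] ℝ} (h : IsArr E ω)
    {i₀ : ι} {ρ : κ → ι} (hR : IsRestr E ω i₀ ρ) :
    Nat.card (chambers E (del ω i₀)) + Nat.card (chambers (base E ω i₀) (ω ∘ ρ)) ≤
      Nat.card (chambers E ω) := by
  classical
  simp only [Nat.card_coe_set_eq]
  -- The chambers of the deletion that meet the positive, respectively negative, side of `i₀`.
  let P : Set ({i // i ≠ i₀} → Bool) :=
    {σ | ∃ v ∈ E, 0 < ω i₀ v ∧ ∀ i, del ω i₀ i v ≠ 0 ∧ (σ i = true ↔ 0 < del ω i₀ i v)}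
  let N : Set ({i // i ≠ i₀} → Bool) :=
    {σ | ∃ v ∈ E, ω i₀ v < 0 ∧ ∀ i, del ω i₀ i v ≠ 0 ∧ (σ i = true ↔ 0 < del ω i₀ i v)}
  obtain ⟨w, hw, hw0⟩ := h.exists_ne i₀
  have hmove : ∀ σ : {i // i ≠ i₀} → Bool, ∀ v ∈ E, ω i₀ v = 0 →
      (∀ i, del ω i₀ i v ≠ 0 ∧ (σ i = true ↔ 0 < del ω i₀ i v)) → σ ∈ P ∩ N := by
    intro σ v hv h0 hσ
    obtain ⟨⟨x, hx, hx0, hx'⟩, ⟨y, hy, hy0, hy'⟩⟩ :=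
      h.flat.perturb (ω i₀) (del ω i₀) hv hw h0 hw0 (fun i => (hσ i).1)
    exact ⟨⟨x, hx, hx0, fun i => ⟨(hx' i).1, (hσ i).2.trans (hx' i).2.symm⟩⟩,
      ⟨y, hy, hy0, fun i => ⟨(hy' i).1, (hσ i).2.trans (hy' i).2.symm⟩⟩⟩
  have h1 : chambers E (del ω i₀) ⊆ P ∪ N := by
    rintro σ ⟨v, hv, hσ⟩
    rcases lt_trichotomy (ω i₀ v) 0 with h0 | h0 | h0
    · exact Or.inr ⟨v, hv, h0, hσ⟩
    · exact Or.inl (hmove σ v hv h0 hσ).1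
    · exact Or.inl ⟨v, hv, h0, hσ⟩
  have h2 : chambers (base E ω i₀) (ω ∘ ρ) ⊆
      (fun (σ : {i // i ≠ i₀} → Bool) s => σ ⟨ρ s, hR.ne s⟩) '' (P ∩ N) := by
    rintro τ ⟨v, ⟨hv, h0⟩, hτ⟩
    refine ⟨fun i => decide (0 < ω i.1 v), hmove _ v hv h0 fun i => ⟨fun hi => ?_, by
      simp [DelRest.del]⟩, ?_⟩
    · obtain ⟨s, hs⟩ := hR.surj i.1 i.2 ⟨v, hv, h0, hi⟩
      exact (hτ s).1 ((hs v hv h0).1 hi)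
    · funext s
      have := (hτ s).2
      simp only [Function.comp_apply] at this
      rw [Bool.eq_iff_iff, this]
      simp
  have h3 : P ⊆ (fun (σ : ι → Bool) (i : {i // i ≠ i₀}) => σ i.1) ''
      (chambers E ω ∩ {σ | σ i₀ = true}) := by
    rintro σ ⟨v, hv, h0, hσ⟩
    refine ⟨fun i => decide (0 < ω i v), ⟨⟨v, hv, fun i => ⟨?_, by simp⟩⟩, by simpa using h0⟩, ?_⟩
    · by_cases hi : i = i₀
      · subst hi; exact h0.ne'
      · exact (hσ ⟨i, hi⟩).1
    · funext i
      rw [Bool.eq_iff_iff, (hσ i).2]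
      simp [DelRest.del]
  have h4 : N ⊆ (fun (σ : ι → Bool) (i : {i // i ≠ i₀}) => σ i.1) ''
      (chambers E ω \ {σ | σ i₀ = true}) := by
    rintro σ ⟨v, hv, h0, hσ⟩
    refine ⟨fun i => decide (0 < ω i v), ⟨⟨v, hv, fun i => ⟨?_, by simp⟩⟩,
      by simpa using h0.le⟩, ?_⟩
    · by_cases hi : i = i₀
      · subst hi; exact h0.ne
      · exact (hσ ⟨i, hi⟩).1
    · funext i
      rw [Bool.eq_iff_iff, (hσ i).2]
      simp [DelRest.del]
  have e1 := Set.ncard_le_ncard h1 (Set.toFinite _)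
  have e2 := (Set.ncard_le_ncard h2 (Set.toFinite _)).trans (Set.ncard_image_le (Set.toFinite _))
  have e3 := (Set.ncard_le_ncard h3 (Set.toFinite _)).trans (Set.ncard_image_le (Set.toFinite _))
  have e4 := (Set.ncard_le_ncard h4 (Set.toFinite _)).trans (Set.ncard_image_le (Set.toFinite _))
  have e5 := Set.ncard_union_add_ncard_inter P N (Set.toFinite _) (Set.toFinite _)
  have e6 := Set.ncard_inter_add_ncard_sdiff_eq_ncard (chambers E ω) {σ | σ i₀ = true}
    (Set.toFinite _)
  omega

/-- Induction on the degree for homogeneous polynomials, one variable at a time. -/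
lemma homog_induction {σ A : Type*} [AddCommGroup A] [Module ℚ A] (T : MvPolynomial σ ℚ →ₗ[ℚ] A)
    (Q : ℕ → Submodule ℚ A) (h0 : T 1 ∈ Q 0)
    (hs : ∀ k f, T f ∈ Q k → ∀ i, T (f * X i) ∈ Q (k + 1)) :
    ∀ k, ∀ f : MvPolynomial σ ℚ, f.IsHomogeneous k → T f ∈ Q k := by
  intro k
  induction k with
  | zero =>
    intro f hf
    have hC := totalDegree_eq_zero_iff_eq_C.1 ((totalDegree_zero_iff_isHomogeneous _).2 hf)
    rw [hC, ← mul_one (C _), ← smul_eq_C_mul, map_smul]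
    exact Submodule.smul_mem _ _ h0
  | succ k ih =>
    intro f hf
    have hmem : f ∈ homogeneousSubmodule σ ℚ k * homogeneousSubmodule σ ℚ 1 := by
      rw [← homogeneousSubmodule_one_pow _ k, ← pow_succ, homogeneousSubmodule_one_pow]
      exact hf
    induction hmem using Submodule.mul_induction_on' with
    | mem_mul_mem a ha b hb =>
      clear hf
      rw [homogeneousSubmodule_one_eq_span_X] at hb
      induction hb using Submodule.span_induction with
      | mem x hx =>
        obtain ⟨i, rfl⟩ := hx
        exact hs k a (ih a ha) i
      | zero => simp
      | add x y _ _ hx hy => rw [mul_add, map_add]; exact Submodule.add_mem _ hx hy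
      | smul c x _ hx => rw [mul_smul_comm, map_smul]; exact Submodule.smul_mem _ _ hx
    | add x hx y hy h1 h2 =>
      have hle : homogeneousSubmodule σ ℚ k * homogeneousSubmodule σ ℚ 1 ≤
        homogeneousSubmodule σ ℚ (k + 1) := homogeneousSubmodule_mul k 1
      rw [map_add]
      exact Submodule.add_mem _ (h1 (hle hx)) (h2 (hle hy))

/-- The homogeneous polynomials of degree `e` not involving `X i₀`. -/
noncomputable def dropPoly (i₀ : ι) (e : ℕ) : Submodule ℚ (MvPolynomial ι ℚ) :=
  (homogeneousSubmodule {i // i ≠ i₀} ℚ e).map (rename Subtype.val).toLinearMap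

lemma X_mem_dropPoly {i i₀ : ι} (h : i ≠ i₀) : X i ∈ dropPoly i₀ 1 :=
  ⟨X ⟨i, h⟩, isHomogeneous_X ℚ _, by simp⟩

lemma one_mem_dropPoly (i₀ : ι) : 1 ∈ dropPoly i₀ 0 :=
  ⟨1, isHomogeneous_one _ _, by simp⟩

lemma mul_mem_dropPoly {i₀ : ι} {a b : ℕ} {f g : MvPolynomial ι ℚ} (hf : f ∈ dropPoly i₀ a)
    (hg : g ∈ dropPoly i₀ b) : f * g ∈ dropPoly i₀ (a + b) := by
  obtain ⟨f, hf, rfl⟩ := hf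
  obtain ⟨g, hg, rfl⟩ := hg
  exact ⟨f * g, IsHomogeneous.mul hf hg, by simp⟩

lemma prod_mem_dropPoly {i₀ : ι} (S : Finset ι) (h : i₀ ∉ S) :
    ∏ i ∈ S, X i ∈ dropPoly i₀ S.card := by
  classical
  induction S using Finset.induction_on with
  | empty => simpa using one_mem_dropPoly i₀
  | insert a S ha ih =>
    rw [Finset.prod_insert ha, Finset.card_insert_of_notMem ha, add_comm]
    exact mul_mem_dropPoly (X_mem_dropPoly (fun e => h (e ▸ Finset.mem_insert_self _ _)))
      (ih fun h' => h (Finset.mem_insert_of_mem h'))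

lemma rename_mem_dropPoly {i₀ : ι} {ρ : κ → ι} (hρ : ∀ s, ρ s ≠ i₀) {m : MvPolynomial κ ℚ} {e : ℕ}
    (hm : m.IsHomogeneous e) : rename ρ m ∈ dropPoly i₀ e := by
  refine ⟨rename (fun s => ⟨ρ s, hρ s⟩) m, hm.rename_isHomogeneous, ?_⟩
  simp only [AlgHom.toLinearMap_apply, rename_rename]
  rfl

variable [DecidableEq ι] [DecidableEq κ]

/-- The degree-`e` polynomials in the other variables, together with the ideal. -/
noncomputable def dropIdl (E : Set U) (ω : ι → U →ᵃ[ℝ] ℝ) (i₀ : ι) (e : ℕ) :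
    Submodule ℚ (MvPolynomial ι ℚ) :=
  (idl E ω).restrictScalars ℚ ⊔ dropPoly i₀ e

lemma dropIdl_of_idl {E : Set U} {ω : ι → U →ᵃ[ℝ] ℝ} {i₀ : ι} {e : ℕ} {f : MvPolynomial ι ℚ}
    (hf : f ∈ idl E ω) : f ∈ dropIdl E ω i₀ e :=
  Submodule.mem_sup_left (S := (idl E ω).restrictScalars ℚ) hf

lemma dropIdl_of_dropPoly {E : Set U} {ω : ι → U →ᵃ[ℝ] ℝ} {i₀ : ι} {e : ℕ} {f : MvPolynomial ι ℚ}
    (hf : f ∈ dropPoly i₀ e) : f ∈ dropIdl E ω i₀ e :=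
  Submodule.mem_sup_right hf

lemma mul_mem_dropIdl {E : Set U} {ω : ι → U →ᵃ[ℝ] ℝ} {i₀ : ι} {a b : ℕ} {f g : MvPolynomial ι ℚ}
    (hf : f ∈ dropPoly i₀ a) (hg : g ∈ dropIdl E ω i₀ b) : f * g ∈ dropIdl E ω i₀ (a + b) := by
  obtain ⟨x, hx, y, hy, rfl⟩ := Submodule.mem_sup.1 hg
  rw [mul_add]
  exact Submodule.add_mem _ (dropIdl_of_idl (Ideal.mul_mem_left _ _ hx))
    (dropIdl_of_dropPoly (mul_mem_dropPoly hf hy))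

/-- A relation of type (3) on the hyperplane `i₀`, multiplied by `X i₀`, holds modulo polynomials
not involving `X i₀`: by convexity the region, empty on the hyperplane, is empty on one of its two
sides, and the relation obtained by adding `i₀` with that sign has the required leading part. -/
lemma X_mul_rel3_mem {E : Set U} (hF : Flat E) (hE : E.Nonempty) (ω : ι → U →ᵃ[ℝ] ℝ) (i₀ : ι)
    (Sp Sm : Finset ι) (hp : i₀ ∉ Sp) (hm : i₀ ∉ Sm) (hd : Disjoint Sp Sm)
    (h : ¬ ∃ v ∈ E, ω i₀ v = 0 ∧ (∀ i ∈ Sp, 0 < ω i v) ∧ ∀ j ∈ Sm, ω j v < 0)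
    (hc : ∃ v ∈ E, ω i₀ v = 0 ∧ ∀ i ∈ Sp ∪ Sm, ω i v = 0) :
    X i₀ * rel3 Sp Sm ∈ dropIdl E ω i₀ (Sp.card + Sm.card) := by
  have hprod : (∏ i ∈ Sp, X i) * ∏ j ∈ Sm, X j ∈ dropIdl E ω i₀ (Sp.card + Sm.card) :=
    dropIdl_of_dropPoly (mul_mem_dropPoly (prod_mem_dropPoly Sp hp) (prod_mem_dropPoly Sm hm))
  obtain ⟨z, hz, hz0, hz'⟩ := hc
  by_cases hpos : ∃ v ∈ E, (∀ i ∈ insert i₀ Sp, 0 < ω i v) ∧ ∀ j ∈ Sm, ω j v < 0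
  · have hneg : ¬ ∃ v ∈ E, (∀ i ∈ Sp, 0 < ω i v) ∧ ∀ j ∈ insert i₀ Sm, ω j v < 0 := by
      rintro ⟨u, hu, hu1, hu2⟩
      obtain ⟨v, hv, hv1, hv2⟩ := hpos
      obtain ⟨x, hx, hx0, hx'⟩ := hF.cross (ω i₀) hu hv (hu2 _ (Finset.mem_insert_self _ _))
        (hv1 _ (Finset.mem_insert_self _ _))
      exact h ⟨x, hx, hx0,
        fun i hi => (hx' _).1 (hu1 i hi) (hv1 i (Finset.mem_insert_of_mem hi)),
        fun j hj => (hx' _).2.1 (hu2 j (Finset.mem_insert_of_mem hj)) (hv2 j hj)⟩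
    have := rel3_mem_idl hE ω Sp (insert i₀ Sm) (Finset.disjoint_insert_right.2 ⟨hp, hd⟩) hneg
      ⟨z, hz, fun i hi => by
        rw [Finset.union_insert] at hi
        rcases Finset.mem_insert.1 hi with rfl | hi
        · exact hz0
        · exact hz' i hi⟩
    rw [rel3_insert_right hm] at this
    have h2 := Submodule.sub_mem _ (dropIdl_of_idl this) hprod
    rwa [add_sub_cancel_right] at h2
  · have := rel3_mem_idl hE ω (insert i₀ Sp) Sm (Finset.disjoint_insert_left.2 ⟨hm, hd⟩) hpos
      ⟨z, hz, fun i hi => by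
        rw [Finset.insert_union] at hi
        rcases Finset.mem_insert.1 hi with rfl | hi
        · exact hz0
        · exact hz' i hi⟩
    rw [rel3_insert_left hp] at this
    have h2 := Submodule.add_mem _ (dropIdl_of_idl this) hprod
    rwa [sub_add_cancel] at h2

/-- Two hyperplanes with the same nonempty trace on the hyperplane `i₀` have, up to sign, the same
product with `X i₀` modulo polynomials not involving `X i₀`. -/
lemma X_mul_X_mem {E : Set U} (hF : Flat E) (hE : E.Nonempty) (ω : ι → U →ᵃ[ℝ] ℝ) (i₀ i j : ι)
    (hi : i ≠ i₀) (hj : j ≠ i₀) (hz : ∃ v ∈ E, ω i₀ v = 0 ∧ ω i v = 0)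
    (hij : ∀ v ∈ E, ω i₀ v = 0 → (ω i v = 0 ↔ ω j v = 0)) :
    ∃ c : ℚ, X i₀ * X i - c • (X i₀ * X j) ∈ dropIdl E ω i₀ 2 := by
  by_cases hne : i = j
  · subst hne
    exact ⟨1, by rw [one_smul, sub_self]; exact Submodule.zero_mem _⟩
  obtain ⟨z, hz, hz0, hz1⟩ := hz
  have hz2 := (hij z hz hz0).1 hz1
  by_cases hpp : ∃ v ∈ E, ω i₀ v = 0 ∧ 0 < ω i v ∧ 0 < ω j v
  · have := X_mul_rel3_mem hF hE ω i₀ {i} {j} (by simpa using hi.symm) (by simpa using hj.symm)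
      (by simpa using hne) (by
        rintro ⟨u, hu, hu0, hu1, hu2⟩
        obtain ⟨v, hv, hv0, hv1, hv2⟩ := hpp
        obtain ⟨x, hx, hx0, hx'⟩ := hF.cross (ω j) hu hv (hu2 j (by simp)) hv2
        have h1 := (hx' (ω i)).1 (hu1 i (by simp)) hv1
        exact h1.ne' ((hij x hx ((hx' _).2.2 hu0 hv0)).2 hx0))
      ⟨z, hz, hz0, by simp [hz1, hz2]⟩
    refine ⟨1, ?_⟩
    simpa [rel3, mul_sub] using this
  · have := X_mul_rel3_mem hF hE ω i₀ {i, j} ∅ (by simp [hi.symm, hj.symm]) (by simp)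
      (by simp) (by
        rintro ⟨u, hu, hu0, hu1, -⟩
        exact hpp ⟨u, hu, hu0, hu1 i (by simp), hu1 j (by simp)⟩)
      ⟨z, hz, hz0, by simp [hz1, hz2]⟩
    refine ⟨-1, ?_⟩
    have h2 := Submodule.neg_mem _ this
    have e : -(X i₀ * rel3 {i, j} ∅) = (X i₀ * X i - (-1 : ℚ) • (X i₀ * X j) : MvPolynomial ι ℚ) := by
      have e1 : ({i, j} : Finset ι).erase i = {j} := by
        rw [Finset.erase_insert]; simpa using hne
      have e2 : ({i, j} : Finset ι).erase j = {i} := by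
        rw [Finset.pair_comm, Finset.erase_insert]; simpa using Ne.symm hne
      rw [rel3, Finset.sum_pair hne, e1, e2]
      simp
      ring
    rw [e] at h2
    rwa [Finset.card_pair hne] at h2

/-- The map `f ↦ X i₀ · f` from polynomials on the restricted arrangement. -/
noncomputable def liftMap (i₀ : ι) (ρ : κ → ι) : MvPolynomial κ ℚ →ₗ[ℚ] MvPolynomial ι ℚ :=
  LinearMap.mulLeft ℚ (X i₀) ∘ₗ (rename ρ).toLinearMap

lemma liftMap_apply (i₀ : ι) (ρ : κ → ι) (f : MvPolynomial κ ℚ) :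
    liftMap i₀ ρ f = X i₀ * rename ρ f := rfl

/-- The image of the degree `k - 1` polynomials of the restriction under `f ↦ X i₀ · f`. -/
noncomputable def liftPoly (i₀ : ι) (ρ : κ → ι) : ℕ → Submodule ℚ (MvPolynomial ι ℚ)
  | 0 => ⊥
  | k + 1 => (homogeneousSubmodule κ ℚ k).map (liftMap i₀ ρ)

/-- Rewriting `X i₀ · X i` in terms of the chosen representatives: if the hyperplane `i` misses `i₀`
the product vanishes, otherwise `X i` may be replaced by `± X (ρ s)`. -/
lemma X_mul_mem_sup {E : Set U} {ω : ι → U →ᵃ[ℝ] ℝ} (h : IsArr E ω)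
    {i₀ : ι} {ρ : κ → ι} (hR : IsRestr E ω i₀ ρ) {i : ι} (hi : i ≠ i₀) {k : ℕ}
    {f : MvPolynomial ι ℚ} (hf : f ∈ dropIdl E ω i₀ k ⊔ liftPoly i₀ ρ k) :
    f * X i ∈ dropIdl E ω i₀ (k + 1) ⊔ liftPoly i₀ ρ (k + 1) := by
  obtain ⟨a, ha, b, hb, rfl⟩ := Submodule.mem_sup.1 hf
  rw [add_mul]
  refine Submodule.add_mem _ (Submodule.mem_sup_left ?_) ?_
  · rw [mul_comm, add_comm]
    exact mul_mem_dropIdl (X_mem_dropPoly hi) ha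
  · cases k with
    | zero =>
      rw [(Submodule.mem_bot ℚ).1 hb, zero_mul]
      exact Submodule.zero_mem _
    | succ k =>
      obtain ⟨g, hg, rfl⟩ := hb
      rw [liftMap_apply]
      by_cases hz : ∃ v ∈ E, ω i₀ v = 0 ∧ ω i v = 0
      · obtain ⟨s, hs⟩ := hR.surj i hi hz
        obtain ⟨c, hc⟩ := X_mul_X_mem h.flat h.nonempty ω i₀ i (ρ s) hi (hR.ne s) hz hs
        have h1 := mul_mem_dropIdl (rename_mem_dropPoly hR.ne hg) hc
        have e : X i₀ * rename ρ g * X i = rename ρ g * (X i₀ * X i - c • (X i₀ * X (ρ s))) +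
            liftMap i₀ ρ (c • (g * X s)) := by
          rw [map_smul, liftMap_apply, map_mul, rename_X, smul_eq_C_mul, smul_eq_C_mul]
          ring
        rw [e]
        refine Submodule.add_mem_sup h1 ⟨_, Submodule.smul_mem _ _ ?_, rfl⟩
        exact IsHomogeneous.mul hg (isHomogeneous_X ℚ s)
      · have h1 : X i₀ * X i ∈ idl E ω := by
          rw [← Finset.prod_pair hi.symm (f := fun i => (X i : MvPolynomial ι ℚ))]
          refine prod_mem_idl h.nonempty ω _ ?_
          rintro ⟨v, hv, hv'⟩
          exact hz ⟨v, hv, hv' i₀ (by simp), hv' i (by simp)⟩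
        rw [mul_right_comm]
        exact Submodule.mem_sup_left (dropIdl_of_idl (Ideal.mul_mem_right _ _ h1))

/-- Modulo the ideal and the polynomials without `X i₀`, every homogeneous polynomial is `X i₀` times
a polynomial in the variables of the restriction. -/
lemma homog_mem_sup {E : Set U} {ω : ι → U →ᵃ[ℝ] ℝ} (h : IsArr E ω)
    {i₀ : ι} {ρ : κ → ι} (hR : IsRestr E ω i₀ ρ) (k : ℕ)
    (f : MvPolynomial ι ℚ) (hf : f.IsHomogeneous k) :
    f ∈ dropIdl E ω i₀ k ⊔ liftPoly i₀ ρ k := by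
  have h1 : ∀ k, ∀ f : MvPolynomial {i // i ≠ i₀} ℚ, f.IsHomogeneous k →
      liftMap i₀ Subtype.val f ∈ dropIdl E ω i₀ (k + 1) ⊔ liftPoly i₀ ρ (k + 1) := by
    refine homog_induction _ (fun k => dropIdl E ω i₀ (k + 1) ⊔ liftPoly i₀ ρ (k + 1)) ?_ ?_
    · refine Submodule.mem_sup_right ⟨1, isHomogeneous_one _ _, ?_⟩
      simp [liftMap_apply]
    · intro k f hf i
      rw [liftMap_apply, map_mul, ← mul_assoc, rename_X]
      exact X_mul_mem_sup h hR i.2 hf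
  refine homog_induction LinearMap.id (fun k => dropIdl E ω i₀ k ⊔ liftPoly i₀ ρ k) ?_ ?_ k f hf
  · exact Submodule.mem_sup_left (dropIdl_of_dropPoly (one_mem_dropPoly i₀))
  · intro k f hf i
    by_cases hi : i = i₀
    · subst hi
      obtain ⟨a, ha, b, hb, rfl⟩ := Submodule.mem_sup.1 hf
      obtain ⟨x, hx, y, ⟨y, hy, rfl⟩, rfl⟩ := Submodule.mem_sup.1 ha
      simp only [LinearMap.id_apply, add_mul]
      refine Submodule.add_mem _ (Submodule.add_mem _ ?_ ?_) ?_
      · exact Submodule.mem_sup_left (dropIdl_of_idl (Ideal.mul_mem_right _ _ hx))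
      · rw [mul_comm]
        exact h1 k y hy
      · cases k with
        | zero =>
          rw [(Submodule.mem_bot ℚ).1 hb, zero_mul]
          exact Submodule.zero_mem _
        | succ k =>
          obtain ⟨g, hg, rfl⟩ := hb
          rw [liftMap_apply]
          refine Submodule.mem_sup_left (dropIdl_of_idl ?_)
          rw [mul_right_comm, ← pow_two]
          exact Ideal.mul_mem_right _ _ (sq_mem_idl E ω i)
    · exact X_mul_mem_sup h hR hi hf

/-- Relations of the deletion hold in `B(𝒜)`, giving `B(𝒜') → B(𝒜)`. -/
lemma rename_mem_idl_of_del {E : Set U} (hE : E.Nonempty) (ω : ι → U →ᵃ[ℝ] ℝ) (i₀ : ι) (k : ℕ)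
    (f : MvPolynomial {i // i ≠ i₀} ℚ) (hf : f ∈ idl E (del ω i₀)) (hk : f.IsHomogeneous k) :
    rename Subtype.val f ∈ idl E ω := by
  have hinj : Function.Injective (Subtype.val : {i // i ≠ i₀} → ι) := Subtype.val_injective
  have key : f ∈ ((idl E ω).restrictScalars ℚ).comap (rename Subtype.val).toLinearMap := by
    refine mem_of_mem_idl hE _ k _ ?_ ?_ ?_ f hf hk
    · intro i m e _ _
      change rename Subtype.val (m * X i ^ 2) ∈ idl E ω
      rw [map_mul, map_pow, rename_X]
      exact Ideal.mul_mem_left _ _ (sq_mem_idl E ω _)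
    · intro S hS m e _ _
      change rename Subtype.val (m * ∏ i ∈ S, X i) ∈ idl E ω
      rw [map_mul, map_prod]
      simp only [rename_X]
      rw [← Finset.prod_image (s := S) (f := fun i => (X i : MvPolynomial ι ℚ))
        (fun _ _ _ _ h => hinj h)]
      refine Ideal.mul_mem_left _ _ (prod_mem_idl hE ω _ ?_)
      rintro ⟨v, hv, h⟩
      exact hS ⟨v, hv, fun i hi => h _ (Finset.mem_image_of_mem _ hi)⟩
    · intro Sp Sm hd hr hc m e _ _
      change rename Subtype.val (m * rel3 Sp Sm) ∈ idl E ω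
      rw [map_mul, rename_rel3 hinj]
      refine Ideal.mul_mem_left _ _ (rel3_mem_idl hE ω _ _ ((Finset.disjoint_image hinj).2 hd) ?_ ?_)
      · rintro ⟨v, hv, h1, h2⟩
        exact hr ⟨v, hv, fun i hi => h1 _ (Finset.mem_image_of_mem _ hi),
          fun i hi => h2 _ (Finset.mem_image_of_mem _ hi)⟩
      · obtain ⟨v, hv, h⟩ := hc
        refine ⟨v, hv, fun i hi => ?_⟩
        rw [← Finset.image_union] at hi
        obtain ⟨s, hs, rfl⟩ := Finset.mem_image.1 hi
        exact h s hs
  exact key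

/-- Relations of the restriction, multiplied by `X i₀`, hold in `B(𝒜)` modulo the image of `B(𝒜')`. -/
lemma liftMap_mem_dropIdl {E : Set U} {ω : ι → U →ᵃ[ℝ] ℝ} (h : IsArr E ω)
    {i₀ : ι} {ρ : κ → ι} (hR : IsRestr E ω i₀ ρ) (k : ℕ)
    (f : MvPolynomial κ ℚ) (hf : f ∈ idl (base E ω i₀) (ω ∘ ρ)) (hk : f.IsHomogeneous k) :
    liftMap i₀ ρ f ∈ dropIdl E ω i₀ (k + 1) := by
  have key : f ∈ (dropIdl E ω i₀ (k + 1)).comap (liftMap i₀ ρ) := by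
    refine mem_of_mem_idl (h.exists_zero i₀) _ k _ ?_ ?_ ?_ f hf hk
    · intro i m e _ _
      refine dropIdl_of_idl ?_
      rw [liftMap_apply, map_mul, map_pow, rename_X]
      exact Ideal.mul_mem_left _ _ (Ideal.mul_mem_left _ _ (sq_mem_idl E ω _))
    · intro S hS m e _ _
      refine dropIdl_of_idl ?_
      have hn : i₀ ∉ S.image ρ := by
        intro hmem
        obtain ⟨s, -, hs⟩ := Finset.mem_image.1 hmem
        exact hR.ne s hs
      have e : liftMap i₀ ρ (m * ∏ i ∈ S, X i) = rename ρ m * ∏ i ∈ insert i₀ (S.image ρ), X i := by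
        rw [liftMap_apply, map_mul, map_prod, Finset.prod_insert hn,
          Finset.prod_image (fun _ _ _ _ h => hR.injective h)]
        simp only [rename_X]
        ring
      rw [e]
      refine Ideal.mul_mem_left _ _ (prod_mem_idl h.nonempty ω _ ?_)
      rintro ⟨v, hv, h'⟩
      exact hS ⟨v, ⟨hv, h' _ (Finset.mem_insert_self _ _)⟩, fun i hi =>
        h' _ (Finset.mem_insert_of_mem (Finset.mem_image_of_mem _ hi))⟩
    · intro Sp Sm hd hr hc m e hm he
      have hn : ∀ S : Finset κ, i₀ ∉ S.image ρ := by
        intro S hmem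
        obtain ⟨s, -, hs⟩ := Finset.mem_image.1 hmem
        exact hR.ne s hs
      have h1 := X_mul_rel3_mem h.flat h.nonempty ω i₀ (Sp.image ρ) (Sm.image ρ) (hn _) (hn _)
        ((Finset.disjoint_image hR.injective).2 hd)
        (by
          rintro ⟨v, hv, hv0, h1, h2⟩
          exact hr ⟨v, ⟨hv, hv0⟩, fun i hi => h1 _ (Finset.mem_image_of_mem _ hi),
            fun i hi => h2 _ (Finset.mem_image_of_mem _ hi)⟩)
        (by
          obtain ⟨v, ⟨hv, hv0⟩, h⟩ := hc
          refine ⟨v, hv, hv0, fun i hi => ?_⟩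
          rw [← Finset.image_union] at hi
          obtain ⟨s, hs, rfl⟩ := Finset.mem_image.1 hi
          exact h s hs)
      rw [Finset.card_image_of_injective _ hR.injective,
        Finset.card_image_of_injective _ hR.injective] at h1
      have h2 := mul_mem_dropIdl (rename_mem_dropPoly hR.ne hm) h1
      rw [he] at h2
      have e : liftMap i₀ ρ (m * rel3 Sp Sm) =
          rename ρ m * (X i₀ * rel3 (Sp.image ρ) (Sm.image ρ)) := by
        rw [liftMap_apply, map_mul, rename_rel3 hR.injective]
        ring
      change liftMap i₀ ρ (m * rel3 Sp Sm) ∈ dropIdl E ω i₀ (k + 1)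
      rwa [e]
  exact key

/-- Multiplication by `X i₀` maps `B(𝒜'')` in degree `k - 1` onto the quotient of `B(𝒜)` in degree
`k` by the image of `B(𝒜')`, whence the bound on dimensions. -/
lemma bdim_le [Finite ι] {E : Set U} {ω : ι → U →ᵃ[ℝ] ℝ} (h : IsArr E ω)
    {i₀ : ι} {ρ : κ → ι} (hR : IsRestr E ω i₀ ρ) (k : ℕ) :
    bdim E ω k ≤ bdim E (del ω i₀) k +
      (if k = 0 then 0 else bdim (base E ω i₀) (ω ∘ ρ) (k - 1)) := by
  have : Finite κ := Finite.of_injective ρ hR.injective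
  let π := (Ideal.Quotient.mkₐ ℚ (idl E ω)).toLinearMap
  let W := (dropPoly i₀ k).map π
  have hdropFG : (dropPoly i₀ k).FG := (homogeneousSubmodule_fg _ _ k).map _
  have : FiniteDimensional ℚ W := Module.Finite.iff_fg.2 (hdropFG.map π)
  have hW : Module.finrank ℚ W ≤ bdim E (del ω i₀) k := by
    have := finrank_sup_map_le (Ideal.Quotient.mkₐ ℚ (idl E (del ω i₀))).toLinearMap
      (π ∘ₗ (rename Subtype.val).toLinearMap) (homogeneousSubmodule {i // i ≠ i₀} ℚ k)
      (homogeneousSubmodule_fg _ _ k) ⊥ (by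
        intro u hu hu0
        refine (Submodule.mem_bot ℚ).2 (Ideal.Quotient.eq_zero_iff_mem.2 ?_)
        exact rename_mem_idl_of_del h.nonempty ω i₀ k u (Ideal.Quotient.eq_zero_iff_mem.1 hu0) hu)
      W (by rw [bot_sup_eq, Submodule.map_comp]; exact le_rfl)
    rwa [finrank_bot, zero_add] at this
  have hdrop : ∀ f ∈ dropIdl E ω i₀ k, π f ∈ W := by
    intro f hf
    obtain ⟨x, hx, y, hy, rfl⟩ := Submodule.mem_sup.1 hf
    have hx0 : π x = 0 := Ideal.Quotient.eq_zero_iff_mem.2 hx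
    rw [map_add, hx0, zero_add]
    exact ⟨y, hy, rfl⟩
  have hle : bGrade (zer E ω) (pos E ω) (neg E ω) k ≤ W ⊔ (liftPoly i₀ ρ k).map π := by
    rintro _ ⟨f, hf, rfl⟩
    obtain ⟨a, ha, b, hb, rfl⟩ := Submodule.mem_sup.1 (homog_mem_sup h hR k f hf)
    rw [map_add]
    exact Submodule.add_mem_sup (hdrop a ha) ⟨b, hb, rfl⟩
  cases k with
  | zero =>
    rw [if_pos rfl, add_zero]
    rw [liftPoly, Submodule.map_bot, sup_bot_eq] at hle
    exact (Submodule.finrank_mono hle).trans hW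
  | succ k =>
    rw [if_neg (Nat.succ_ne_zero k), Nat.add_sub_cancel]
    refine le_trans (finrank_sup_map_le
      (Ideal.Quotient.mkₐ ℚ (idl (base E ω i₀) (ω ∘ ρ))).toLinearMap (π ∘ₗ liftMap i₀ ρ)
      (homogeneousSubmodule κ ℚ k) (homogeneousSubmodule_fg _ _ k) W ?_ _ ?_)
      (Nat.add_le_add_right hW _)
    · intro u hu hu0
      exact hdrop _ (liftMap_mem_dropIdl h hR k u (Ideal.Quotient.eq_zero_iff_mem.1 hu0) hu)
    · rw [Submodule.map_comp]
      exact hle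

end Restriction

/-! ### The chamber count forces equality -/

section UpperBound

universe u

variable {U : Type*} [AddCommGroup U] [Module ℝ U]

/-- An arrangement without hyperplanes has `B = ℚ`, concentrated in degree `0`. -/
lemma bdim_le_of_isEmpty {ι : Type*} [DecidableEq ι] [IsEmpty ι] (E : Set U)
    (ω : ι → U →ᵃ[ℝ] ℝ) (k : ℕ) : bdim E ω k ≤ if k = 0 then 1 else 0 := by
  have hspan : bGrade (zer E ω) (pos E ω) (neg E ω) k ≤
      Submodule.span ℚ (if k = 0 then {1} else ∅) := by
    rintro _ ⟨f, hf, rfl⟩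
    have hf' : f.IsHomogeneous k := hf
    by_cases hk : k = 0
    · rw [if_pos hk, Submodule.mem_span_singleton, eq_C_of_isEmpty f]
      exact ⟨_, (Algebra.algebraMap_eq_smul_one _).symm⟩
    · rw [if_neg hk, Submodule.span_empty, Submodule.mem_bot]
      have h0 : f = 0 := by
        by_contra hne
        refine hk (hf'.inj_right ?_ hne)
        rw [eq_C_of_isEmpty f]
        exact isHomogeneous_C _ _
      rw [h0, map_zero]
  by_cases hk : k = 0
  · rw [if_pos hk] at hspan ⊢
    exact (Submodule.finrank_mono hspan).trans ((finrank_span_le_card _).trans (by simp))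
  · rw [if_neg hk, Submodule.span_empty, le_bot_iff] at hspan
    rw [if_neg hk, bdim, hspan, finrank_bot]

/-- Every hyperplane admits a choice of representatives for the restricted arrangement. -/
lemma exists_isRestr {ι : Type u} (E : Set U) (ω : ι → U →ᵃ[ℝ] ℝ) (i₀ : ι) :
    ∃ (κ : Type u) (ρ : κ → ι), IsRestr E ω i₀ ρ := by
  let J := {i : ι // i ≠ i₀ ∧ ∃ v ∈ E, ω i₀ v = 0 ∧ ω i v = 0}
  let trace : J → Set U := fun i => {v | v ∈ E ∧ ω i₀ v = 0 ∧ ω i.1 v = 0}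
  have key : ∀ i j : J, trace i = trace j ↔
      ∀ v ∈ E, ω i₀ v = 0 → (ω i.1 v = 0 ↔ ω j.1 v = 0) := by
    intro i j
    simp only [trace, Set.ext_iff, Set.mem_ofPred_eq]
    exact forall_congr' fun v => by tauto
  refine ⟨Quotient (Setoid.ker trace), fun s => s.out.1, ⟨fun s => s.out.2.1, fun s => s.out.2.2,
    fun i hi hv => ?_, fun s t hst => ?_⟩⟩
  · refine ⟨Quotient.mk _ ⟨i, hi, hv⟩, (key ⟨i, hi, hv⟩ _).1 ?_⟩
    exact (Setoid.ker_def.1 (Quotient.mk_out (s := Setoid.ker trace) ⟨i, hi, hv⟩)).symm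
  · exact Quotient.out_equiv_out.1 (Setoid.ker_def.2 ((key _ _).2 hst))

lemma sum_shift (c : ℕ → ℕ) (K : ℕ) :
    ∑ k ∈ Finset.range K, (if k = 0 then 0 else c (k - 1)) = ∑ k ∈ Finset.range (K - 1), c k := by
  cases K with
  | zero => simp
  | succ K => simp [Finset.sum_range_succ']

/-- The total dimension of `B` is at most the number of chambers: both sides are compared along
deletion and restriction. -/
lemma sum_bdim_le {ι : Type u} [Finite ι] [DecidableEq ι] {E : Set U} {ω : ι → U →ᵃ[ℝ] ℝ}
    (h : IsArr E ω) (K : ℕ) : ∑ k ∈ Finset.range K, bdim E ω k ≤ Nat.card (chambers E ω) := by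
  suffices H : ∀ n, ∀ (ι : Type u) [Finite ι] [DecidableEq ι] (E : Set U) (ω : ι → U →ᵃ[ℝ] ℝ),
      IsArr E ω → Nat.card ι = n →
      ∀ K, ∑ k ∈ Finset.range K, bdim E ω k ≤ Nat.card (chambers E ω) from
    H _ ι E ω h rfl K
  clear h K
  intro n
  induction n using Nat.strong_induction_on with
  | _ n ih =>
    intro ι _ _ E ω h hn K
    rcases isEmpty_or_nonempty ι with hι | ⟨⟨i₀⟩⟩
    · obtain ⟨v, hv⟩ := h.nonempty
      have : Nonempty (chambers E ω) := ⟨isEmptyElim, v, hv, isEmptyElim⟩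
      calc ∑ k ∈ Finset.range K, bdim E ω k
          ≤ ∑ k ∈ Finset.range K, if k = 0 then 1 else 0 :=
            Finset.sum_le_sum fun k _ => bdim_le_of_isEmpty E ω k
        _ ≤ 1 := by
            rw [Finset.sum_ite_eq']
            split_ifs <;> simp
        _ ≤ _ := Nat.card_pos
    · classical
      obtain ⟨κ, ρ, hR⟩ := exists_isRestr E ω i₀
      have : Finite κ := Finite.of_injective ρ hR.injective
      have hdel : Nat.card {i // i ≠ i₀} < n := by
        rw [← hn]
        exact Finite.card_subtype_lt (p := fun i => i ≠ i₀) (x := i₀) (by simp)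
      have hrestr : Nat.card κ < n := by
        refine lt_of_le_of_lt (Nat.card_le_card_of_injective
          (fun s => (⟨ρ s, hR.ne s⟩ : {i // i ≠ i₀})) fun s t hst => ?_) hdel
        exact hR.injective (congrArg Subtype.val hst)
      calc ∑ k ∈ Finset.range K, bdim E ω k
          ≤ ∑ k ∈ Finset.range K, (bdim E (del ω i₀) k +
              (if k = 0 then 0 else bdim (base E ω i₀) (ω ∘ ρ) (k - 1))) :=
            Finset.sum_le_sum fun k _ => bdim_le h hR k
        _ = ∑ k ∈ Finset.range K, bdim E (del ω i₀) k +
              ∑ k ∈ Finset.range (K - 1), bdim (base E ω i₀) (ω ∘ ρ) k := by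
            rw [Finset.sum_add_distrib, sum_shift]
        _ ≤ Nat.card (chambers E (del ω i₀)) + Nat.card (chambers (base E ω i₀) (ω ∘ ρ)) :=
            add_le_add (ih _ hdel _ _ _ (h.del i₀) rfl K) (ih _ hrestr _ _ _ (h.restr hR) rfl _)
        _ ≤ _ := card_chambers_add_le h hR

/-- Deletion–restriction for `B`: the inequality `bdim_le` cannot be strict in any degree, since
the totals over all degrees are squeezed by the numbers of chambers. -/
lemma bdim_eq {ι κ : Type*} [Finite ι] [DecidableEq ι] [DecidableEq κ] {E : Set U}
    {ω : ι → U →ᵃ[ℝ] ℝ} (h : IsArr E ω) {i₀ : ι} {ρ : κ → ι} (hR : IsRestr E ω i₀ ρ) (k : ℕ) :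
    bdim E ω k = bdim E (del ω i₀) k +
      (if k = 0 then 0 else bdim (base E ω i₀) (ω ∘ ρ) (k - 1)) := by
  have : Finite κ := Finite.of_injective ρ hR.injective
  have := Fintype.ofFinite ι
  refine (bdim_le h hR k).antisymm (not_lt.1 fun hlt => ?_)
  let K := Fintype.card ι + k + 1
  have e1 := card_chambers_le_sum_bdim h.flat h.nonempty ω
    (show Fintype.card ι < K by simp only [K]; omega)
  have e2 := Finset.sum_lt_sum (fun j (_ : j ∈ Finset.range K) => bdim_le h hR j)
    ⟨k, Finset.mem_range.2 (by simp only [K]; omega), hlt⟩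
  rw [Finset.sum_add_distrib, sum_shift] at e2
  have e3 := sum_bdim_le (h.del i₀) K
  have e4 := sum_bdim_le (h.restr hR) (K - 1)
  have e5 := card_chambers_add_le h hR
  omega

end UpperBound

end DelRest

/-- deletion–restriction for `B`.  Suppose the hyperplanes of `𝒜` are
pairwise distinct; let `𝒜'` be the deletion of `H 0` and `𝒜''` the restriction to `H 0`
(its hyperplanes being the distinct nonempty intersections `H i ∩ H 0`, with half-space
data induced by a choice `r` of a defining hyperplane for each intersection).  Then for
all `k`, `dim B(𝒜)ₖ = dim B(𝒜')ₖ + dim B(𝒜'')ₖ₋₁`. -/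
theorem bAlg_deletion_restriction {n : ℕ} (ω : Fin (n + 1) → V →ᵃ[ℝ] ℝ)
    (hω : ∀ i, (ω i).linear ≠ 0)
    (hdist : ∀ i j : Fin (n + 1), i ≠ j → Hyp ω i ≠ Hyp ω j)
    (r : restIdx ω → Fin (n + 1))
    (hr : ∀ s : restIdx ω, r s ≠ 0 ∧ s.1 = Hyp ω (r s) ∩ Hyp ω 0) :
    ∀ k : ℕ,
      Module.finrank ℚ (bGrade (Hyp ω) (Hplus ω) (Hminus ω) k) =
        Module.finrank ℚ (bGrade (fun i : {i : Fin (n + 1) // i ≠ 0} => Hyp ω i.1)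
            (fun i => Hplus ω i.1) (fun i => Hminus ω i.1) k) +
          (if k = 0 then 0 else
            Module.finrank ℚ (bGrade (fun s : restIdx ω => s.1)
              (fun s => Hplus ω (r s) ∩ Hyp ω 0)
              (fun s => Hminus ω (r s) ∩ Hyp ω 0) (k - 1))) := by
  intro k
  have hArr : DelRest.IsArr (Set.univ : Set V) ω := by
    have hsurj : ∀ i, Function.Surjective (ω i) := fun i =>
      (AffineMap.linear_surjective_iff _).1 (LinearMap.surjective (hω i))
    refine ⟨fun _ _ _ _ _ _ _ => Set.mem_univ _, ⟨0, Set.mem_univ _⟩, fun i => ?_, fun i => ?_,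
      fun i j hij => ?_⟩
    · obtain ⟨v, hv⟩ := hsurj i 0
      exact ⟨v, Set.mem_univ _, hv⟩
    · obtain ⟨v, hv⟩ := hsurj i 1
      exact ⟨v, Set.mem_univ _, by rw [hv]; exact one_ne_zero⟩
    · by_contra hne
      exact hdist i j hne (Set.ext fun v => hij v (Set.mem_univ _))
  have hR : DelRest.IsRestr (Set.univ : Set V) ω 0 r := by
    refine ⟨fun s => (hr s).1, fun s => ?_, fun i hi hv => ?_, fun s t hst => ?_⟩
    · obtain ⟨v, hv⟩ := s.2.1
      rw [(hr s).2] at hv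
      exact ⟨v, Set.mem_univ _, hv.2, hv.1⟩
    · obtain ⟨v, -, hv0, hvi⟩ := hv
      let s : restIdx ω := ⟨Hyp ω i ∩ Hyp ω 0, ⟨v, hvi, hv0⟩, i, hi, rfl⟩
      refine ⟨s, fun w _ hw => ?_⟩
      have hs := Set.ext_iff.1 (hr s).2 w
      exact ⟨fun h => (hs.1 ⟨h, hw⟩).1, fun h => (hs.2 ⟨h, hw⟩).1⟩
    · refine Subtype.ext ?_
      rw [(hr s).2, (hr t).2]
      ext v
      exact ⟨fun h => ⟨(hst v (Set.mem_univ _) h.2).1 h.1, h.2⟩,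
        fun h => ⟨(hst v (Set.mem_univ _) h.2).2 h.1, h.2⟩⟩
  have hZ : Hyp ω = DelRest.zer Set.univ ω := by
    funext i; ext v; simp [Hyp, DelRest.zer]
  have hP : Hplus ω = DelRest.pos Set.univ ω := by
    funext i; ext v; simp [Hplus, DelRest.pos]
  have hM : Hminus ω = DelRest.neg Set.univ ω := by
    funext i; ext v; simp [Hminus, DelRest.neg]
  have hZ1 : (fun i : {i : Fin (n + 1) // i ≠ 0} => Hyp ω i.1) =
      DelRest.zer Set.univ (DelRest.del ω 0) := by rw [hZ]; rfl
  have hP1 : (fun i : {i : Fin (n + 1) // i ≠ 0} => Hplus ω i.1) =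
      DelRest.pos Set.univ (DelRest.del ω 0) := by rw [hP]; rfl
  have hM1 : (fun i : {i : Fin (n + 1) // i ≠ 0} => Hminus ω i.1) =
      DelRest.neg Set.univ (DelRest.del ω 0) := by rw [hM]; rfl
  have hZ2 : (fun s : restIdx ω => s.1) =
      DelRest.zer (DelRest.base Set.univ ω 0) (ω ∘ r) := by
    funext s
    rw [(hr s).2]
    ext v
    simp [Hyp, DelRest.zer, DelRest.base, and_comm]
  have hP2 : (fun s : restIdx ω => Hplus ω (r s) ∩ Hyp ω 0) =
      DelRest.pos (DelRest.base Set.univ ω 0) (ω ∘ r) := by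
    funext s; ext v; simp [Hyp, Hplus, DelRest.pos, DelRest.base, and_comm]
  have hM2 : (fun s : restIdx ω => Hminus ω (r s) ∩ Hyp ω 0) =
      DelRest.neg (DelRest.base Set.univ ω 0) (ω ∘ r) := by
    funext s; ext v; simp [Hyp, Hminus, DelRest.neg, DelRest.base, and_comm]
  rw [hZ1, hP1, hM1, hZ2, hP2, hM2, hZ, hP, hM]
  exact DelRest.bdim_eq hArr hR k
end

section
/- Let c𝒜 be the cone of the affine arrangement 𝒜. The ℚ-algebra homomorphism φ : B(c𝒜) → B(𝒜) determined by e_{cH_i} ↦ e_{H_i} for 1 ≤ i ≤ n and e_{cH_0} ↦ 0 is well defined, the ℚ-linear map t : B(𝒜) → B(c𝒜) determined on monomials by e_S ↦ e_{cH_0}·e_{cS} (where for S ⊆ {1,…,n}, e_S = ∏_{i∈S} e_{H_i} and e_{cS} = ∏_{i∈S} e_{cH_i}) is well defined, and the sequence 0 → B(𝒜) →^t B(c𝒜) →^φ B(𝒜) → 0 is exact. -/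
/-!
Everything is deduced from the relations of `B`. Up to sign, a relation of family (3) is a signed
boundary sum `∑_{k ∈ S} ε_k ∏_{i ∈ S \ k} e_i`, for a sign pattern `ε` on `S` occurring at no point
of the space; `SatRel z f y` says that the elements `y i` satisfy the relations of `B` multiplied by
`z`, which amounts to a well defined linear map `p(e) ↦ z * p(y)` on `B`.

The maps `φ` and `t` are well defined by `satRel_phi` and `satRel_t`. The input is linear algebra:
Gordan's theorem turns unrealizable sign patterns of linear forms into linear dependencies, and a set
of affine hyperplanes with empty intersection gives a linear dependency of the cone forms in which
`cω₀` occurs.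

The image of `t` is the ideal `(e₀)`, because `e₀ ^ 2 = 0`. It is the kernel of `φ`: the relations
of `B(𝒜)` hold in `B(c𝒜) / (e₀)` (`satRel_of_none_eq_zero`), which gives an inverse of the map
`B(c𝒜) / (e₀) → B(𝒜)` induced by `φ`.

Injectivity of `t` is a dimension count. Deletion and restriction, for regions and for `B`, give
`dim B(𝒜) ≤ r(𝒜)`, the number of regions (`rank_le_card_regions`). For a central arrangement one has
`dim B ≥ r` (`card_regions_le_rank`): filter the functions on the set of regions by degree in the
`±1`-valued coordinate functions `x_i`. Since `x_i ^ 2 = 1`, and since `∏ (x_i + ε_i)` and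
`∏ (x_i - ε_i)` vanish when the sign pattern does not occur, the relations of `B` hold in the
associated graded algebra, which has dimension `r`. Finally `r(c𝒜) ≥ 2 r(𝒜)`, each region of `𝒜`
providing two opposite regions of the cone. Hence
`dim (image t) = dim B(c𝒜) - dim B(𝒜) ≥ 2 r(𝒜) - r(𝒜) ≥ dim B(𝒜)`.
-/

open MvPolynomial Set

variable {V : Type*} [NormedAddCommGroup V] [NormedSpace ℝ V] [FiniteDimensional ℝ V]

/-- The defining linear forms of the cone `c𝒜` on `V ⊕ ℝ`: the extra hyperplane `cH₀`
has form `cω₀(v, r) = -r`, and `cHᵢ` has form `cωᵢ(v, r) = ω̄ᵢ(v) - r·aᵢ`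
(where `Hᵢ = ω̄ᵢ⁻¹(aᵢ)`, i.e. `aᵢ = -ωᵢ(0)`). -/
noncomputable def coneForm {n : ℕ} (ω : Fin n → V →ᵃ[ℝ] ℝ) :
    Option (Fin n) → (V × ℝ) →ₗ[ℝ] ℝ
  | none => -LinearMap.snd ℝ V ℝ
  | some i => (ω i).linear.comp (LinearMap.fst ℝ V ℝ) + (ω i 0) • LinearMap.snd ℝ V ℝ

/-- The hyperplane `cH j` of the cone. -/
noncomputable def cHyp {n : ℕ} (ω : Fin n → V →ᵃ[ℝ] ℝ) (j : Option (Fin n)) :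
    Set (V × ℝ) := {p | coneForm ω j p = 0}

/-- The open positive half-space `cH j⁺` of the cone. -/
noncomputable def cHplus {n : ℕ} (ω : Fin n → V →ᵃ[ℝ] ℝ) (j : Option (Fin n)) :
    Set (V × ℝ) := {p | 0 < coneForm ω j p}

/-- The open negative half-space `cH j⁻` of the cone. -/
noncomputable def cHminus {n : ℕ} (ω : Fin n → V →ᵃ[ℝ] ℝ) (j : Option (Fin n)) :
    Set (V × ℝ) := {p | coneForm ω j p < 0}

/-! ### Boundary sums and the universal property of `B` -/

section Algebra

/-- If `e₀` and the `y i` generate `A`, every element of `A` is a polynomial in the `y i` modulo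
`e₀`. -/
lemma exists_aeval_add_mul {ι A : Type*} [CommRing A] [Algebra ℚ A] (e : A) (y : ι → A)
    (hgen : Algebra.adjoin ℚ (insert e (Set.range y)) = ⊤) (a : A) :
    ∃ (p : MvPolynomial ι ℚ) (b : A), a = aeval y p + e * b := by
  have ha : a ∈ Algebra.adjoin ℚ (insert e (Set.range y)) := by rw [hgen]; trivial
  induction ha using Algebra.adjoin_induction with
  | mem x hx =>
    rcases hx with rfl | ⟨i, rfl⟩
    · exact ⟨0, 1, by simp⟩
    · exact ⟨X i, 0, by simp⟩
  | algebraMap r => exact ⟨C r, 0, by simp⟩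
  | add a b _ _ ha hb =>
    obtain ⟨p, c, rfl⟩ := ha
    obtain ⟨q, d, rfl⟩ := hb
    exact ⟨p + q, c + d, by rw [map_add]; ring⟩
  | mul a b _ _ ha hb =>
    obtain ⟨p, c, rfl⟩ := ha
    obtain ⟨q, d, rfl⟩ := hb
    exact ⟨p * q, c * aeval y q + aeval y p * d + e * c * d, by rw [map_mul]; ring⟩

variable {ι κ A W : Type*} [DecidableEq ι] [DecidableEq κ] [CommRing A]

/-- The signed boundary sum `∑_{k ∈ S} ε_k ∏_{i ∈ S \ k} y_i`. Up to a global sign, the generators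
of family (3) are these sums, with `ε = 1` on `S⁺` and `ε = -1` on `S⁻`. -/
def bdrySum (ε : ι → ℤˣ) (y : ι → A) (S : Finset ι) : A :=
  ∑ k ∈ S, ((ε k : ℤ) : A) * ∏ i ∈ S.erase k, y i

lemma bdrySum_insert (ε : ι → ℤˣ) (y : ι → A) {S : Finset ι} {a : ι} (ha : a ∉ S) :
    bdrySum ε y (insert a S) = ((ε a : ℤ) : A) * ∏ i ∈ S, y i + y a * bdrySum ε y S := by
  unfold bdrySum
  rw [Finset.sum_insert ha, Finset.erase_insert ha, Finset.mul_sum]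
  congr 1
  refine Finset.sum_congr rfl fun k hk => ?_
  have hne : a ≠ k := fun h => ha (h ▸ hk)
  rw [Finset.erase_insert_of_ne hne, Finset.prod_insert (fun h => ha (Finset.mem_of_mem_erase h))]
  ring

lemma map_bdrySum {A' F : Type*} [CommRing A'] [FunLike F A A'] [RingHomClass F A A'] (g : F)
    (ε : ι → ℤˣ) (y : ι → A) (S : Finset ι) :
    g (bdrySum ε y S) = bdrySum ε (fun i => g (y i)) S := by
  simp [bdrySum, map_sum, map_prod]

lemma bdrySum_map (g : ι ↪ κ) (ε : κ → ℤˣ) (y : κ → A) (S : Finset ι) :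
    bdrySum ε y (S.map g) = bdrySum (fun i => ε (g i)) (fun i => y (g i)) S := by
  unfold bdrySum
  rw [Finset.sum_map]
  refine Finset.sum_congr rfl fun k _ => ?_
  rw [← Finset.map_erase, Finset.prod_map]

lemma intUnit_mul_eq_zero {u : ℤˣ} {a : A} (h : ((u : ℤ) : A) * a = 0) : a = 0 := by
  rcases Int.units_eq_one_or u with rfl | rfl <;> simpa using h

/-- Multiplying the boundary sum by a `y_a` of square zero leaves only the term of index `a`. -/
lemma prod_eq_zero_of_bdrySum {ε : ι → ℤˣ} {y : ι → A} (hy : ∀ i, y i ^ 2 = 0) {T : Finset ι}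
    (hT : T.Nonempty) (h : bdrySum ε y T = 0) : ∏ i ∈ T, y i = 0 := by
  obtain ⟨a, ha⟩ := hT
  have h1 := bdrySum_insert ε y (Finset.notMem_erase a T)
  rw [Finset.insert_erase ha, h] at h1
  rw [← Finset.mul_prod_erase T y ha]
  apply intUnit_mul_eq_zero (u := ε a)
  linear_combination (-y a) * h1 - bdrySum ε y (T.erase a) * hy a

lemma prod_eq_zero_of_subset {y : ι → A} {T S : Finset ι} (hTS : T ⊆ S)
    (h : ∏ i ∈ T, y i = 0) : ∏ i ∈ S, y i = 0 := by
  rw [← Finset.prod_sdiff hTS, h, mul_zero]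

lemma bdrySum_eq_zero_of_subset {ε : ι → ℤˣ} {y : ι → A} (hy : ∀ i, y i ^ 2 = 0)
    {T S : Finset ι} (hT : T.Nonempty) (hTS : T ⊆ S) (h : bdrySum ε y T = 0) :
    bdrySum ε y S = 0 := by
  have key : ∀ U : Finset ι, Disjoint U T → bdrySum ε y (U ∪ T) = 0 := by
    intro U
    induction U using Finset.induction_on with
    | empty => intro _; simpa using h
    | insert a U ha ih =>
      intro hd
      rw [Finset.disjoint_insert_left] at hd
      have hn : a ∉ U ∪ T := by simp [ha, hd.1]
      rw [Finset.insert_union, bdrySum_insert ε y hn, ih hd.2,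
        prod_eq_zero_of_subset Finset.subset_union_right (prod_eq_zero_of_bdrySum hy hT h)]
      simp
  have := key (S \ T) Finset.sdiff_disjoint
  rwa [Finset.sdiff_union_of_subset hTS] at this

lemma cordovil_eq_neg_bdrySum (y : ι → A) {Sp Sm : Finset ι} (hd : Disjoint Sp Sm) {ε : ι → ℤˣ}
    (hp : ∀ i ∈ Sp, ε i = 1) (hm : ∀ i ∈ Sm, ε i = -1) :
    (∑ k ∈ Sm, ((∏ i ∈ Sp, y i) * ∏ j ∈ Sm.erase k, y j)) -
      ∑ k ∈ Sp, ((∏ i ∈ Sp.erase k, y i) * ∏ j ∈ Sm, y j) = -bdrySum ε y (Sp ∪ Sm) := by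
  unfold bdrySum
  rw [Finset.sum_union hd, neg_add, ← Finset.sum_neg_distrib, ← Finset.sum_neg_distrib,
    sub_eq_add_neg, add_comm, ← Finset.sum_neg_distrib]
  congr 1
  · refine Finset.sum_congr rfl fun k hk => ?_
    have hk' : k ∉ Sm := Finset.disjoint_left.1 hd hk
    rw [Finset.erase_union_distrib, Finset.erase_eq_of_notMem hk', Finset.prod_union
      (Finset.disjoint_of_subset_left (Finset.erase_subset _ _) hd), hp k hk]
    simp
  · refine Finset.sum_congr rfl fun k hk => ?_
    have hk' : k ∉ Sp := Finset.disjoint_right.1 hd hk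
    rw [Finset.erase_union_distrib, Finset.erase_eq_of_notMem hk', Finset.prod_union
      (Finset.disjoint_of_subset_right (Finset.erase_subset _ _) hd), hm k hk]
    simp

/-- The ideal `𝓘₀` of the arrangement cut out by real functions `f i`. Both the affine arrangement
and its cone are of this form, definitionally. -/
noncomputable abbrev arrIdeal (f : ι → W → ℝ) : Ideal (MvPolynomial ι ℚ) :=
  bIdeal (fun i => {w | f i w = 0}) (fun i => {w | 0 < f i w}) (fun i => {w | f i w < 0})

/-- The algebra `B` of the arrangement cut out by real functions `f i`. -/
noncomputable abbrev ArrAlg (f : ι → W → ℝ) := MvPolynomial ι ℚ ⧸ arrIdeal f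

/-- The class of the variable `e i` in `B`. -/
noncomputable def arrGen (f : ι → W → ℝ) (i : ι) : ArrAlg f :=
  Ideal.Quotient.mk (arrIdeal f) (X i)

/-- The elements `y i` satisfy the defining relations of `B` after multiplication by `z`. For
`z = 1` these are the families of elements which define algebra maps out of `B`; for general `z`
they define linear maps `e_S ↦ z * y_S` out of `B`. -/
structure SatRel (z : A) (f : ι → W → ℝ) (y : ι → A) : Prop where
  sq : ∀ i, z * y i ^ 2 = 0
  empty : ∀ S : Finset ι, (∀ w, ∃ i ∈ S, f i w ≠ 0) → z * ∏ i ∈ S, y i = 0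
  circ : ∀ (S : Finset ι) (ε : ι → ℤˣ), (∀ w, ∃ i ∈ S, ((ε i : ℤ) : ℝ) * f i w ≤ 0) →
    (∃ w, ∀ i ∈ S, f i w = 0) → z * bdrySum ε y S = 0

lemma SatRel.mul_aeval_eq_zero [Algebra ℚ A] {z : A} {f : ι → W → ℝ} {y : ι → A}
    (h : SatRel z f y) {p : MvPolynomial ι ℚ} (hp : p ∈ arrIdeal f) : z * aeval y p = 0 := by
  unfold arrIdeal bIdeal at hp
  induction hp using Submodule.span_induction with
  | zero => simp
  | add a b _ _ ha hb => rw [map_add, mul_add, ha, hb, add_zero]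
  | smul a b _ hb => rw [smul_eq_mul, map_mul, mul_left_comm, hb, mul_zero]
  | mem p hp =>
    rcases hp with (⟨i, rfl⟩ | ⟨S, hS, rfl⟩) | ⟨Sp, Sm, hd, hsgn, hne, rfl⟩
    · simpa using h.sq i
    · have := h.empty S (fun w => by
        by_contra! hc
        have : w ∈ (⋂ i ∈ S, {w | f i w = 0}) := by simpa using hc
        rw [hS] at this
        exact this)
      simpa using this
    · set ε : ι → ℤˣ := fun i => if i ∈ Sp then 1 else -1 with hε
      have hp : ∀ i ∈ Sp, ε i = 1 := fun i hi => by simp [hε, hi]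
      have hm : ∀ i ∈ Sm, ε i = -1 := fun i hi => by
        simp [hε, Finset.disjoint_right.1 hd hi]
      rw [cordovil_eq_neg_bdrySum _ hd hp hm, map_neg, map_bdrySum, mul_neg, neg_eq_zero]
      simp only [aeval_X]
      apply h.circ
      · intro w
        by_contra! hc
        have : w ∈ (⋂ i ∈ Sp, {w | 0 < f i w}) ∩ (⋂ j ∈ Sm, {w | f j w < 0}) := by
          simp only [mem_inter_iff, mem_iInter, mem_ofPred_eq]
          constructor
          · intro i hi
            simpa [hp i hi] using hc i (Finset.mem_union_left _ hi)
          · intro i hi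
            simpa [hm i hi] using hc i (Finset.mem_union_right _ hi)
        rw [hsgn] at this
        exact this
      · obtain ⟨w, hw⟩ := Set.nonempty_iff_ne_empty.2 hne
        exact ⟨w, by simpa using hw⟩

lemma satRel_arrGen (f : ι → W → ℝ) : SatRel 1 f (arrGen f) where
  sq i := by
    rw [one_mul, arrGen, ← map_pow, Ideal.Quotient.eq_zero_iff_mem]
    exact Ideal.subset_span (Or.inl (Or.inl ⟨i, rfl⟩))
  empty S hS := by
    simp only [one_mul, arrGen]
    rw [← map_prod, Ideal.Quotient.eq_zero_iff_mem]
    refine Ideal.subset_span (Or.inl (Or.inr ⟨S, ?_, rfl⟩))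
    ext w
    simpa using hS w
  circ S ε hS hw := by
    have h1 : bdrySum ε (arrGen f) S = Ideal.Quotient.mk (arrIdeal f) (bdrySum ε X S) := by
      rw [map_bdrySum]; rfl
    rw [one_mul, h1, Ideal.Quotient.eq_zero_iff_mem]
    set Sp := S.filter (fun i => ε i = 1)
    set Sm := S.filter (fun i => ¬ ε i = 1)
    have hu : Sp ∪ Sm = S := Finset.filter_union_filter_not_eq _ _
    have hd : Disjoint Sp Sm := Finset.disjoint_filter_filter_not _ _ _
    have hp : ∀ i ∈ Sp, ε i = 1 := fun i hi => (Finset.mem_filter.1 hi).2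
    have hm : ∀ i ∈ Sm, ε i = -1 := fun i hi =>
      (Int.units_eq_one_or _).resolve_left (Finset.mem_filter.1 hi).2
    rw [← neg_mem_iff, ← hu, ← cordovil_eq_neg_bdrySum _ hd hp hm]
    refine Ideal.subset_span (Or.inr ⟨Sp, Sm, hd, ?_, ?_, rfl⟩)
    · rw [Set.eq_empty_iff_forall_notMem]
      intro w hw
      simp only [mem_inter_iff, mem_iInter, mem_ofPred_eq] at hw
      obtain ⟨i, hi, hle⟩ := hS w
      rw [← hu, Finset.mem_union] at hi
      rcases hi with hi | hi
      · have := hw.1 i hi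
        rw [hp i hi] at hle
        simp at hle; linarith
      · have := hw.2 i hi
        rw [hm i hi] at hle
        simp at hle; linarith
    · obtain ⟨w, hw⟩ := hw
      refine Set.nonempty_iff_ne_empty.1 ⟨w, ?_⟩
      rw [hu]; simpa using hw

lemma arrIdeal_le {f : ι → W → ℝ} {J : Ideal (MvPolynomial ι ℚ)}
    (h : SatRel 1 f (fun i => Ideal.Quotient.mk J (X i))) : arrIdeal f ≤ J := by
  intro q hq
  have h1 := h.mul_aeval_eq_zero hq
  have h2 : aeval (fun i => Ideal.Quotient.mk J (X i)) = Ideal.Quotient.mkₐ ℚ J := by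
    apply MvPolynomial.algHom_ext
    intro i
    rw [aeval_X]; rfl
  rw [one_mul, h2] at h1
  exact Ideal.Quotient.eq_zero_iff_mem.1 h1

/-- The linear map `B → A`, `p(e) ↦ z * p(y)`. -/
noncomputable def SatRel.lin [Algebra ℚ A] {z : A} {f : ι → W → ℝ} {y : ι → A}
    (h : SatRel z f y) : ArrAlg f →ₗ[ℚ] A :=
  Submodule.liftQ ((arrIdeal f).restrictScalars ℚ)
    ((LinearMap.mulLeft ℚ z).comp (aeval y).toLinearMap) (fun _ hp => h.mul_aeval_eq_zero hp)

lemma SatRel.lin_mk [Algebra ℚ A] {z : A} {f : ι → W → ℝ} {y : ι → A}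
    (h : SatRel z f y) (p : MvPolynomial ι ℚ) :
    h.lin (Ideal.Quotient.mk (arrIdeal f) p) = z * aeval y p := rfl

/-- The algebra map `B → A`, `e i ↦ y i`. -/
noncomputable def SatRel.hom [Algebra ℚ A] {f : ι → W → ℝ} {y : ι → A}
    (h : SatRel 1 f y) : ArrAlg f →ₐ[ℚ] A :=
  Ideal.Quotient.liftₐ (arrIdeal f) (aeval y)
    (fun p hp => by simpa using h.mul_aeval_eq_zero hp)

lemma SatRel.hom_mk [Algebra ℚ A] {f : ι → W → ℝ} {y : ι → A}
    (h : SatRel 1 f y) (p : MvPolynomial ι ℚ) :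
    h.hom (Ideal.Quotient.mk (arrIdeal f) p) = aeval y p := rfl

lemma SatRel.map [Algebra ℚ A] {A' : Type*} [CommRing A'] {f : ι → W → ℝ}
    {y : ι → A} (h : SatRel 1 f y) (g : A →+* A') : SatRel 1 f (fun i => g (y i)) where
  sq i := by rw [one_mul, ← map_pow, ← one_mul (y i ^ 2), h.sq, map_zero]
  empty S hS := by rw [one_mul, ← map_prod, ← one_mul (∏ i ∈ S, y i), h.empty S hS, map_zero]
  circ S ε h1 h2 := by
    rw [one_mul, ← map_bdrySum, ← one_mul (bdrySum ε y S), h.circ S ε h1 h2, map_zero]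

lemma arrAlg_mk_eq_aeval (f : ι → W → ℝ) (p : MvPolynomial ι ℚ) :
    Ideal.Quotient.mk (arrIdeal f) p = aeval (arrGen f) p := by
  have : (Ideal.Quotient.mkₐ ℚ (arrIdeal f)) = aeval (arrGen f) := by
    apply MvPolynomial.algHom_ext
    intro i
    rw [aeval_X]; rfl
  exact DFunLike.congr_fun this p

lemma adjoin_arrGen (f : ι → W → ℝ) : Algebra.adjoin ℚ (Set.range (arrGen f)) = ⊤ := by
  rw [Algebra.adjoin_range_eq_range_aeval, AlgHom.range_eq_top]
  intro a
  obtain ⟨p, rfl⟩ := Ideal.Quotient.mk_surjective a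
  exact ⟨p, (arrAlg_mk_eq_aeval f p).symm⟩

/-- The image of `p(e) ↦ e₀ * p(y)` is the whole ideal generated by `e₀`. -/
lemma SatRel.mem_range_lin [Algebra ℚ A] {e : A} {f : ι → W → ℝ} {y : ι → A}
    (h : SatRel e f y) (he : e ^ 2 = 0)
    (hgen : Algebra.adjoin ℚ (insert e (Set.range y)) = ⊤) (a : A) :
    a ∈ LinearMap.range h.lin ↔ a ∈ Ideal.span {e} := by
  rw [Ideal.mem_span_singleton]
  constructor
  · rintro ⟨b, rfl⟩
    obtain ⟨p, rfl⟩ := Ideal.Quotient.mk_surjective b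
    exact ⟨_, h.lin_mk p⟩
  · rintro ⟨b, rfl⟩
    obtain ⟨p, c, rfl⟩ := exists_aeval_add_mul e y hgen b
    refine ⟨Ideal.Quotient.mk _ p, ?_⟩
    rw [h.lin_mk]
    linear_combination (-c) * he

end Algebra

/-! ### Linear dependencies and relations -/

section Dependencies

variable {ι A W : Type*} [AddCommGroup W] [Module ℝ W]

/-- Gordan's theorem: if no vector is strictly positive on all the `f i`, some nonzero nonnegative
combination of them vanishes. -/
lemma gordan (S : Finset ι) (f : ι → W →ₗ[ℝ] ℝ) (h : ∀ w, ∃ i ∈ S, f i w ≤ 0) :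
    ∃ c : ι → ℝ, (∀ i ∈ S, 0 ≤ c i) ∧ (∃ i ∈ S, c i ≠ 0) ∧ ∀ w, ∑ i ∈ S, c i * f i w = 0 := by
  classical
  -- Separate the image of `(f i)_i` from the open positive orthant.
  let L : W →ₗ[ℝ] (S → ℝ) := LinearMap.pi (fun i => f i)
  have hdisj : Disjoint (Set.pi Set.univ (fun _ : S => Set.Ioi (0 : ℝ)))
      (LinearMap.range L : Set (S → ℝ)) := by
    rw [Set.disjoint_left]
    rintro _ hx ⟨w, rfl⟩
    obtain ⟨i, hi, hle⟩ := h w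
    exact absurd (hx ⟨i, hi⟩ trivial) (not_lt.2 hle)
  obtain ⟨g, u, hg1, hg2⟩ := geometric_hahn_banach_open
    (convex_pi (fun _ _ => convex_Ioi (0 : ℝ)))
    (isOpen_set_pi Set.finite_univ (fun _ _ => isOpen_Ioi))
    (LinearMap.range L).convex hdisj
  have hu : u ≤ 0 := by simpa using hg2 0 (Submodule.zero_mem _)
  have hgL : ∀ w, g (L w) = 0 := by
    intro w
    by_contra hne
    have := hg2 (L (((u - 1) / g (L w)) • w)) ⟨_, rfl⟩
    rw [map_smul, map_smul, smul_eq_mul, div_mul_cancel₀ _ hne] at this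
    linarith
  have hsum : ∀ x : S → ℝ, g x = ∑ i, x i * g (Pi.single i 1) := by
    intro x
    conv_lhs => rw [pi_eq_sum_univ' x]
    rw [map_sum]
    refine Finset.sum_congr rfl fun i _ => ?_
    rw [map_smul, smul_eq_mul]
  have hone : g (fun _ => 1) < 0 := lt_of_lt_of_le (hg1 _ (fun _ _ => Set.mem_Ioi.2 one_pos)) hu
  refine ⟨fun i => if hi : i ∈ S then -g (Pi.single ⟨i, hi⟩ 1) else 0, ?_, ?_, ?_⟩
  · intro i hi
    simp only [hi, dif_pos]
    by_contra! hc
    have hpos : 0 < g (Pi.single ⟨i, hi⟩ 1) := by linarith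
    set M := -g (fun _ => 1) / g (Pi.single ⟨i, hi⟩ 1) with hM
    have hM0 : 0 < M := div_pos (by linarith) hpos
    have hx := hg1 ((fun _ => 1) + M • Pi.single ⟨i, hi⟩ 1) (by
      intro j _
      have : 0 ≤ (Pi.single (⟨i, hi⟩ : S) (1 : ℝ) : S → ℝ) j := by
        rw [Pi.single_apply]; split_ifs <;> norm_num
      simp only [Pi.add_apply, Pi.smul_apply, smul_eq_mul, Set.mem_Ioi]
      positivity)
    rw [map_add, map_smul, smul_eq_mul, hM, div_mul_cancel₀ _ hpos.ne'] at hx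
    linarith
  · by_contra! hc
    have : g (fun _ => 1) = 0 := by
      rw [hsum]
      refine Finset.sum_eq_zero fun i _ => ?_
      have := hc i i.2
      simp only [i.2, dif_pos, neg_eq_zero] at this
      simp [this]
    linarith
  · intro w
    rw [← Finset.sum_attach]
    have := hgL w
    rw [hsum] at this
    rw [← neg_eq_zero, ← Finset.sum_neg_distrib, ← this]
    refine Finset.sum_congr rfl fun i _ => ?_
    have h2 : L w i = f i w := rfl
    simp only [i.2, dif_pos, h2]
    ring

variable [DecidableEq ι] [CommRing A]

/-- A linear dependency with all coefficients nonzero gives the relation whose signs are those of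
the coefficients. -/
lemma exists_bdrySum_eq_zero {f : ι → W →ₗ[ℝ] ℝ} {y : ι → A}
    (h : SatRel 1 (fun i w => f i w) y) {T : Finset ι} (hT : T.Nonempty) {c : ι → ℝ}
    (hc : ∀ i ∈ T, c i ≠ 0) (hsum : ∀ w, ∑ i ∈ T, c i * f i w = 0) :
    ∃ ε : ι → ℤˣ, bdrySum ε y T = 0 := by
  refine ⟨fun i => if 0 < c i then 1 else -1, ?_⟩
  rw [← one_mul (bdrySum _ _ _)]
  refine h.circ T _ ?_ ⟨0, by simp⟩
  intro w
  by_contra! hw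
  refine (Finset.sum_pos (fun i hi => ?_) hT).ne' (hsum w)
  have := hw i hi
  rcases lt_or_gt_of_ne (hc i hi) with h1 | h1
  · simp only [h1.not_gt, if_false] at this
    push_cast at this
    nlinarith
  · simp only [h1, if_true] at this
    push_cast at this
    nlinarith

end Dependencies

/-! ### The maps between `B(𝒜)` and `B(c𝒜)` -/

section Cone

variable {W A : Type*} [NormedAddCommGroup W] [NormedSpace ℝ W] [CommRing A]
  {n : ℕ} (ω : Fin n → W →ᵃ[ℝ] ℝ)

lemma affine_apply_eq (g : W →ᵃ[ℝ] ℝ) (v : W) : g v = g.linear v + g 0 :=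
  congrFun g.decomp v

lemma coneForm_none (p : W × ℝ) : coneForm ω none p = -p.2 := rfl

lemma coneForm_some (i : Fin n) (p : W × ℝ) :
    coneForm ω (some i) p = (ω i).linear p.1 + ω i 0 * p.2 := rfl

lemma coneForm_some_one (i : Fin n) (v : W) : coneForm ω (some i) (v, 1) = ω i v := by
  rw [coneForm_some, affine_apply_eq (ω i) v]; simp

/-- If `p` lies on `H i`, then `cω i` is the pullback of `ω i` along `(v, r) ↦ p + v - r p`. -/
lemma coneForm_some_eq {i : Fin n} {p : W} (hp : ω i p = 0) (q : W × ℝ) :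
    coneForm ω (some i) q = ω i (p + q.1 - q.2 • p) := by
  rw [affine_apply_eq] at hp
  rw [coneForm_some, affine_apply_eq (ω i) (p + q.1 - q.2 • p), map_sub, map_add, map_smul,
    smul_eq_mul]
  linear_combination (q.2 - 1) * hp

/-- An inconsistent system `ω i = 0`, `i ∈ S`, yields a linear dependency among the cone forms of
`S` and `cω₀`, in which `cω₀` occurs. -/
lemma exists_cone_dependency {S : Finset (Fin n)} (hS : ∀ w, ∃ i ∈ S, ω i w ≠ 0) :
    ∃ (T : Finset (Option (Fin n))) (c : Option (Fin n) → ℝ), none ∈ T ∧ T.eraseNone ⊆ S ∧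
      (∀ j ∈ T, c j ≠ 0) ∧ ∀ q, ∑ j ∈ T, c j * coneForm ω j q = 0 := by
  classical
  have hmem : coneForm ω none ∈
      Submodule.span ℝ (Set.range (fun i : S => coneForm ω (some i.1))) := by
    apply mem_span_of_iInf_ker_le_ker
    intro q hq
    simp only [Submodule.mem_iInf, LinearMap.mem_ker] at hq ⊢
    rw [coneForm_none, neg_eq_zero]
    by_contra hr
    obtain ⟨i, hi, hne⟩ := hS (q.2⁻¹ • q.1)
    apply hne
    have h1 := hq ⟨i, hi⟩
    rw [coneForm_some] at h1
    rw [affine_apply_eq, map_smul, smul_eq_mul]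
    field_simp
    linear_combination h1
  obtain ⟨d, hd⟩ := (Submodule.mem_span_range_iff_exists_fun ℝ).1 hmem
  let c : Option (Fin n) → ℝ := fun j => j.elim (-1) (fun i => if hi : i ∈ S then d ⟨i, hi⟩ else 0)
  refine ⟨(insert none (S.map Function.Embedding.some)).filter (fun j => c j ≠ 0), c, ?_, ?_, ?_, ?_⟩
  · simp [c]
  · intro i hi
    simp at hi
    exact hi.1
  · intro j hj
    exact (Finset.mem_filter.1 hj).2
  · intro q
    rw [Finset.sum_filter_of_ne (fun j _ hne => left_ne_zero_of_mul hne),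
      Finset.sum_insert (by simp), Finset.sum_map, ← Finset.sum_attach]
    have h2 := LinearMap.congr_fun hd q
    simp only [LinearMap.coe_sum, Finset.sum_apply, LinearMap.smul_apply, smul_eq_mul] at h2
    rw [← h2]
    simp [c]

variable {ω}

/-- Relations of family (3) for `𝒜` hold for the cone as well, by pulling back along the map of
`coneForm_some_eq`. -/
lemma cone_bdrySum_some {y : Option (Fin n) → A} (hy : SatRel 1 (fun j q => coneForm ω j q) y)
    (S : Finset (Fin n)) (ε : Fin n → ℤˣ) (h1 : ∀ w, ∃ i ∈ S, ((ε i : ℤ) : ℝ) * ω i w ≤ 0)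
    (h2 : ∃ w, ∀ i ∈ S, ω i w = 0) : bdrySum ε (fun i => y (some i)) S = 0 := by
  obtain ⟨p, hp⟩ := h2
  have := hy.circ (S.map Function.Embedding.some) (fun j => j.elim 1 ε) (by
    intro q
    obtain ⟨i, hi, hle⟩ := h1 (p + q.1 - q.2 • p)
    refine ⟨some i, by simpa using hi, ?_⟩
    simpa [coneForm_some_eq ω (hp i hi)] using hle) ⟨0, by simp⟩
  rw [one_mul, bdrySum_map] at this
  exact this

/-- The relations needed for `t` to be well defined. -/
lemma satRel_t {y : Option (Fin n) → A} (hy : SatRel 1 (fun j q => coneForm ω j q) y) :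
    SatRel (y none) (fun i w => ω i w) (fun i => y (some i)) where
  sq i := by rw [← one_mul (y (some i) ^ 2), hy.sq, mul_zero]
  empty S hS := by
    obtain ⟨T, c, hnT, hTS, hc, hsum⟩ := exists_cone_dependency ω hS
    obtain ⟨ε, hε⟩ := exists_bdrySum_eq_zero hy ⟨none, hnT⟩ hc hsum
    have h1 := prod_eq_zero_of_bdrySum (fun i => by simpa using hy.sq i) ⟨none, hnT⟩ hε
    have h2 := prod_eq_zero_of_subset (S := insert none (S.map Function.Embedding.some))
      (fun j hj => by
        rcases j with _ | i
        · simp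
        · simpa using hTS (Finset.mem_eraseNone.2 hj)) h1
    rwa [Finset.prod_insert (by simp), Finset.prod_map] at h2
  circ S ε h1 h2 := by rw [cone_bdrySum_some hy S ε h1 h2, mul_zero]

lemma prod_eraseNone (y : Option (Fin n) → A) (T : Finset (Option (Fin n))) :
    ∏ j ∈ T.erase none, y j = ∏ i ∈ T.eraseNone, y (some i) := by
  rw [← Finset.map_some_eraseNone, Finset.prod_map]; rfl

/-- Once `e₀` is set to zero, the relations of the cone imply those of the affine arrangement. -/
lemma satRel_of_none_eq_zero {y : Option (Fin n) → A}
    (hy : SatRel 1 (fun j q => coneForm ω j q) y) (h0 : y none = 0) :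
    SatRel 1 (fun i w => ω i w) (fun i => y (some i)) where
  sq i := hy.sq _
  empty S hS := by
    obtain ⟨T, c, hnT, hTS, hc, hsum⟩ := exists_cone_dependency ω hS
    obtain ⟨ε, hε⟩ := exists_bdrySum_eq_zero hy ⟨none, hnT⟩ hc hsum
    have h1 := bdrySum_insert ε y (Finset.notMem_erase none T)
    rw [Finset.insert_erase hnT, hε, h0, zero_mul, add_zero] at h1
    have h2 := intUnit_mul_eq_zero h1.symm
    rw [prod_eraseNone] at h2
    rw [one_mul]
    exact prod_eq_zero_of_subset hTS h2
  circ S ε h1 h2 := by rw [cone_bdrySum_some hy S ε h1 h2, mul_zero]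

/-- The relations needed for `φ` to be well defined. By Gordan's theorem a relation of family (3) of
the cone contains one, on a subset `T`, coming from a linear dependency with signs `ε`. Restricted to
height `1`, that dependency shows that the relation on `T` follows from family (3) of `𝒜` if the
hyperplanes in `T` meet at height `1`, and from family (2) otherwise. -/
lemma satRel_phi {y : Option (Fin n) → A} (h0 : y none = 0)
    (hy : SatRel 1 (fun i w => ω i w) (fun i => y (some i))) :
    SatRel 1 (fun j q => coneForm ω j q) y where
  sq j := by
    rcases j with _ | i
    · simp [h0]
    · exact hy.sq i
  empty S hS := by
    obtain ⟨i, _, hi⟩ := hS 0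
    simp at hi
  circ S ε h1 _ := by
    have hsq : ∀ j, y j ^ 2 = 0 := by
      rintro (_ | i)
      · simp [h0]
      · simpa using hy.sq i
    obtain ⟨c, hc0, ⟨k, hk, hck⟩, hsum⟩ := gordan S
      (fun j => ((ε j : ℤ) : ℝ) • coneForm ω j) h1
    rw [one_mul]
    set T := S.filter (fun j => c j ≠ 0) with hT
    have hkT : k ∈ T := Finset.mem_filter.2 ⟨hk, hck⟩
    have hcT : ∀ j ∈ T, 0 < c j := fun j hj =>
      lt_of_le_of_ne (hc0 j (Finset.mem_filter.1 hj).1) (Finset.mem_filter.1 hj).2.symm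
    have hεT : ∀ j, c j * ((ε j : ℤ) : ℝ) = 0 → c j = 0 := fun j hj => by
      rcases Int.units_eq_one_or (ε j) with h | h <;> simpa [h] using hj
    have hsumT : ∀ q, ∑ j ∈ T, c j * (((ε j : ℤ) : ℝ) * coneForm ω j q) = 0 := by
      intro q
      rw [hT, Finset.sum_filter_of_ne (fun j _ hne => left_ne_zero_of_mul hne)]
      exact hsum q
    refine bdrySum_eq_zero_of_subset hsq ⟨k, hkT⟩ (Finset.filter_subset _ _) ?_
    by_cases hn : none ∈ T
    · have h2 := bdrySum_insert ε y (Finset.notMem_erase none T)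
      rw [Finset.insert_erase hn] at h2
      rw [h2, h0, zero_mul, add_zero, prod_eraseNone]
      have := hy.empty T.eraseNone (by
        intro v
        by_contra! hv
        have h3 := hsumT (v, 1)
        rw [← Finset.add_sum_erase T _ hn, Finset.sum_eq_zero, coneForm_none] at h3
        · exact (hcT none hn).ne' (hεT none (by simpa using h3))
        · rintro (_ | i) hj
          · simp at hj
          · rw [coneForm_some_one, hv i (by simpa using hj)]; simp)
      rw [one_mul] at this
      rw [this, mul_zero]
    · have hTmap : T = T.eraseNone.map Function.Embedding.some := by
        rw [Finset.map_some_eraseNone, Finset.erase_eq_of_notMem hn]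
      by_cases hcons : ∃ v, ∀ i ∈ T.eraseNone, ω i v = 0
      · rw [hTmap, bdrySum_map]
        rw [← one_mul (bdrySum _ _ _)]
        refine hy.circ _ _ ?_ hcons
        intro v
        by_contra! hv
        refine (Finset.sum_pos (fun j hj => ?_) ⟨k, hkT⟩).ne' (hsumT (v, 1))
        rcases j with _ | i
        · exact absurd hj hn
        · rw [coneForm_some_one]
          exact mul_pos (hcT _ hj) (hv i (by simpa using hj))
      -- A common zero of all but one of the `ω i` would be a zero of the last one too.
      · rw [hTmap, bdrySum_map]
        refine Finset.sum_eq_zero fun k hk => ?_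
        have := hy.empty (T.eraseNone.erase k) (by
          intro v
          by_contra! hv
          refine hcons ⟨v, fun i hi => ?_⟩
          by_cases hik : i = k
          · subst hik
            have hi' : some i ∈ T := by simpa using hi
            have h3 := hsumT (v, 1)
            rw [← Finset.add_sum_erase T _ hi', Finset.sum_eq_zero, coneForm_some_one] at h3
            · rw [add_zero, ← mul_assoc] at h3
              rcases mul_eq_zero.1 h3 with h4 | h4
              · exact absurd (hεT _ h4) (hcT _ hi').ne'
              · exact h4
            · rintro (_ | l) hj
              · exact absurd (Finset.mem_of_mem_erase hj) hn
              · rw [coneForm_some_one, hv l (by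
                  rw [Finset.mem_erase] at hj ⊢
                  exact ⟨fun h => hj.1 (by rw [h]), by simpa using hj.2⟩)]
                simp
          · exact hv i (Finset.mem_erase.2 ⟨hik, hi⟩))
        rw [one_mul] at this
        exact mul_eq_zero_of_right _ this

end Cone

/-! ### Upper bound: the dimension of `B` is at most the number of regions -/

section UpperBound

/-- The sign vectors of the regions of the arrangement cut out by the functions `f i`. -/
def regions {ι W : Type*} (f : ι → W → ℝ) : Set (ι → ℤˣ) :=
  {ε | ∃ w, ∀ i, 0 < ((ε i : ℤ) : ℝ) * f i w}

lemma exists_sign_mul_pos {r : ℝ} (hr : r ≠ 0) : ∃ s : ℤˣ, 0 < ((s : ℤ) : ℝ) * r := by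
  rcases lt_or_gt_of_ne hr with h | h
  · exact ⟨-1, by simpa using h⟩
  · exact ⟨1, by simpa using h⟩

lemma SatRel.comp {ι κ A W : Type*} [DecidableEq ι] [DecidableEq κ] [CommRing A]
    {f : κ → W → ℝ} {y : κ → A} (h : SatRel 1 f y) (g : ι ↪ κ) :
    SatRel 1 (fun i => f (g i)) (fun i => y (g i)) where
  sq i := h.sq _
  empty S hS := by
    have := h.empty (S.map g) (fun w => by simpa using hS w)
    rwa [Finset.prod_map] at this
  circ S ε h1 h2 := by
    have := h.circ (S.map g) (Function.extend g ε 1)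
      (fun w => by simpa [g.injective.extend_apply] using h1 w) (by simpa using h2)
    rw [bdrySum_map] at this
    simpa [g.injective.extend_apply] using this

variable {W : Type*} [AddCommGroup W] [Module ℝ W]

/-- If a sign pattern does not occur on the hyperplane `g = 0`, then by convexity it fails to occur
on one of its two sides. -/
lemma exists_side {ι : Type*} (S : Finset ι) (ω : ι → W →ᵃ[ℝ] ℝ) (g : W →ᵃ[ℝ] ℝ) (ε : ι → ℤˣ)
    (h : ∀ w, g w = 0 → ∃ i ∈ S, ((ε i : ℤ) : ℝ) * ω i w ≤ 0) :
    ∃ s : ℤˣ, ∀ w, ((s : ℤ) : ℝ) * g w ≤ 0 ∨ ∃ i ∈ S, ((ε i : ℤ) : ℝ) * ω i w ≤ 0 := by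
  by_contra! hc
  obtain ⟨w₁, h1, h1'⟩ := hc 1
  obtain ⟨w₂, h2, h2'⟩ := hc (-1)
  simp only [Units.val_one, Int.cast_one, one_mul, Units.val_neg, Int.cast_neg, neg_mul] at h1 h2
  have hpos : 0 < g w₁ - g w₂ := by linarith
  set θ : ℝ := g w₁ / (g w₁ - g w₂) with hθ
  have hθ0 : 0 < θ := div_pos h1 hpos
  have hθ1 : θ < 1 := by rw [hθ, div_lt_one hpos]; linarith
  obtain ⟨i, hi, hle⟩ := h (AffineMap.lineMap w₁ w₂ θ) (by
    rw [AffineMap.apply_lineMap, AffineMap.lineMap_apply_module', smul_eq_mul, hθ]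
    field_simp
    ring)
  rw [AffineMap.apply_lineMap, AffineMap.lineMap_apply_module', smul_eq_mul] at hle
  have := h1' i hi
  have := h2' i hi
  nlinarith

/-- A point on the hyperplane `g = 0` and off the others can be pushed to either side. -/
lemma exists_push {ι : Type*} [Finite ι] (ω : ι → W →ᵃ[ℝ] ℝ) (g : W →ᵃ[ℝ] ℝ) (ε : ι → ℤˣ)
    (hg : ∃ w, g w ≠ 0) {w : W} (hgw : g w = 0) (hw : ∀ i, 0 < ((ε i : ℤ) : ℝ) * ω i w)
    (s : ℤˣ) : ∃ w', 0 < ((s : ℤ) : ℝ) * g w' ∧ ∀ i, 0 < ((ε i : ℤ) : ℝ) * ω i w' := by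
  obtain ⟨w₁, hw₁⟩ := hg
  obtain ⟨s₁, hs₁⟩ := exists_sign_mul_pos hw₁
  have hline : ∀ (h : W →ᵃ[ℝ] ℝ) (δ : ℝ),
      h (AffineMap.lineMap w w₁ δ) = δ * (h w₁ - h w) + h w := fun h δ => by
    rw [AffineMap.apply_lineMap, AffineMap.lineMap_apply_module', smul_eq_mul]
  have hev : ∀ᶠ δ : ℝ in nhds 0, ∀ i,
      0 < ((ε i : ℤ) : ℝ) * (δ * (ω i w₁ - ω i w) + ω i w) := by
    rw [Filter.eventually_all]
    intro i
    have hcont : Continuous (fun δ : ℝ => ((ε i : ℤ) : ℝ) * (δ * (ω i w₁ - ω i w) + ω i w)) := by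
      fun_prop
    exact (hcont.tendsto 0).eventually_const_lt (by simpa using hw i)
  obtain ⟨r, hr, hball⟩ := Metric.eventually_nhds_iff.1 hev
  have hsabs : |((s * s₁ : ℤˣ) : ℤ) * (r / 2 : ℝ)| < r := by
    rcases Int.units_eq_one_or (s * s₁) with h | h <;> rw [h] <;>
      simp [abs_of_pos (half_pos hr)] <;> linarith
  refine ⟨AffineMap.lineMap w w₁ (((s * s₁ : ℤˣ) : ℤ) * (r / 2 : ℝ)), ?_, fun i => ?_⟩
  · rw [hline, hgw]
    rcases Int.units_eq_one_or s with rfl | rfl <;> simp <;> nlinarith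
  · rw [hline]
    exact hball (by rw [Real.dist_0_eq_abs]; exact hsabs) i

/-- If `e₀` is redundant, and `H₀` meets no region of the other hyperplanes, the first hyperplane
may be dropped. -/
lemma rank_le_of_redundant {n : ℕ} (ω : Fin (n + 1) → W →ᵃ[ℝ] ℝ)
    (ih : Module.rank ℚ (ArrAlg (fun (i : Fin n) w => ω i.succ w)) ≤
      (Nat.card (regions (fun (i : Fin n) w => ω i.succ w)) : Cardinal))
    (h1 : ∃ p : MvPolynomial (Fin n) ℚ, arrGen (fun i w => ω i w) 0 =
      aeval (fun i : Fin n => arrGen (fun i w => ω i w) i.succ) p)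
    (h2 : ∀ w, (∀ i : Fin n, ω i.succ w ≠ 0) → ω 0 w ≠ 0) :
    Module.rank ℚ (ArrAlg (fun i w => ω i w)) ≤
      (Nat.card (regions (fun i w => ω i w)) : Cardinal) := by
  have hsat := (satRel_arrGen (fun i w => ω i w)).comp (Fin.succEmb n)
  have hsurj : Function.Surjective hsat.hom := by
    rw [← AlgHom.range_eq_top, eq_top_iff, ← adjoin_arrGen, Algebra.adjoin_le_iff]
    rintro _ ⟨i, rfl⟩
    refine Fin.cases ?_ (fun i => ?_) i
    · obtain ⟨p, hp⟩ := h1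
      exact ⟨Ideal.Quotient.mk _ p, by rw [hp]; exact hsat.hom_mk p⟩
    · exact ⟨Ideal.Quotient.mk _ (X i), by
        refine (hsat.hom_mk (X i)).trans ?_
        rw [aeval_X]; rfl⟩
  refine (LinearMap.rank_le_of_surjective hsat.hom.toLinearMap hsurj).trans (ih.trans ?_)
  rw [Nat.cast_le]
  refine Nat.card_le_card_of_surjective
    (fun ε : regions (fun i w => ω i w) => (⟨fun i => ε.1 i.succ, ?_⟩ :
      regions (fun (i : Fin n) w => ω i.succ w))) ?_
  · obtain ⟨w, hw⟩ := ε.2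
    exact ⟨w, fun i => hw i.succ⟩
  · rintro ⟨ε, w, hw⟩
    obtain ⟨s, hs⟩ := exists_sign_mul_pos (h2 w (fun i => right_ne_zero_of_mul (hw i).ne'))
    refine ⟨⟨Fin.cons s ε, w, fun i => ?_⟩, ?_⟩
    · refine Fin.cases ?_ (fun i => ?_) i
      · simpa using hs
      · simpa using hw i
    · simp

/-- The parametrization of the hyperplane through `p` parallel to `ker g`. -/
noncomputable def hypParam (g : W →ₗ[ℝ] ℝ) (p : W) : LinearMap.ker g →ᵃ[ℝ] W :=
  (LinearMap.ker g).subtype.toAffineMap + AffineMap.const ℝ _ p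

lemma hypParam_apply (g : W →ₗ[ℝ] ℝ) (p : W) (v : LinearMap.ker g) :
    hypParam g p v = v + p := rfl

lemma apply_hypParam (g : W →ᵃ[ℝ] ℝ) {p : W} (hp : g p = 0) (v : LinearMap.ker g.linear) :
    g (hypParam g.linear p v) = 0 := by
  have h := g.map_vadd p (v : W)
  have hv : g.linear v = 0 := v.2
  rw [hv, hp] at h
  simpa [hypParam_apply] using h

lemma exists_hypParam (g : W →ᵃ[ℝ] ℝ) {p w : W} (hp : g p = 0) (hw : g w = 0) :
    ∃ v, hypParam g.linear p v = w := by
  refine ⟨⟨w - p, ?_⟩, by simp [hypParam_apply]⟩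
  have h := g.linearMap_vsub w p
  rw [vsub_eq_sub, vsub_eq_sub, hw, hp, sub_zero] at h
  exact h

/-- Deletion and restriction for regions: a region of the restriction to `H₀` splits a region of the
deletion in two. -/
lemma card_regions_ge {n : ℕ} (ω : Fin (n + 1) → W →ᵃ[ℝ] ℝ) (h0 : ∃ w, ω 0 w ≠ 0)
    {p : W} (hp : ω 0 p = 0) :
    Nat.card (regions (fun (i : Fin n) v => ω i.succ (hypParam (ω 0).linear p v))) +
      Nat.card (regions (fun (i : Fin n) w => ω i.succ w)) ≤
      Nat.card (regions (fun i w => ω i w)) := by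
  classical
  have hcons : ∀ (s : ℤˣ) (ε : Fin n → ℤˣ) (w : W), 0 < ((s : ℤ) : ℝ) * ω 0 w →
      (∀ i, 0 < ((ε i : ℤ) : ℝ) * ω i.succ w) →
      (Fin.cons s ε : Fin (n + 1) → ℤˣ) ∈ regions (fun i w => ω i w) := by
    intro s ε w h1 h2
    refine ⟨w, fun i => ?_⟩
    refine Fin.cases ?_ (fun i => ?_) i
    · simpa using h1
    · simpa using h2 i
  have hres : ∀ (s : ℤˣ) (ε : regions (fun (i : Fin n) v =>
      ω i.succ (hypParam (ω 0).linear p v))),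
      (Fin.cons s ε.1 : Fin (n + 1) → ℤˣ) ∈ regions (fun i w => ω i w) := by
    rintro s ⟨ε, v, hv⟩
    obtain ⟨w, h1, h2⟩ := exists_push (fun i : Fin n => ω i.succ) (ω 0) ε h0
      (apply_hypParam (ω 0) hp v) hv s
    exact hcons s ε w h1 h2
  have hdel : ∀ ε : regions (fun (i : Fin n) w => ω i.succ w), ∃ s : ℤˣ,
      (Fin.cons s ε.1 : Fin (n + 1) → ℤˣ) ∈ regions (fun i w => ω i w) ∧
      (s = -1 → (Fin.cons 1 ε.1 : Fin (n + 1) → ℤˣ) ∉ regions (fun i w => ω i w)) := by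
    rintro ⟨ε, w, hw⟩
    by_cases h1 : (Fin.cons 1 ε : Fin (n + 1) → ℤˣ) ∈ regions (fun i w => ω i w)
    · exact ⟨1, h1, fun h => absurd h (by decide)⟩
    refine ⟨-1, ?_, fun _ => h1⟩
    by_cases hw0 : ω 0 w = 0
    · obtain ⟨w', h3, h4⟩ := exists_push (fun i : Fin n => ω i.succ) (ω 0) ε h0 hw0 hw (-1)
      exact hcons _ ε w' h3 h4
    · obtain ⟨s, hs⟩ := exists_sign_mul_pos hw0
      have h5 := hcons s ε w hs hw
      rcases Int.units_eq_one_or s with rfl | rfl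
      · exact absurd h5 h1
      · exact h5
  choose s hs1 hs2 using hdel
  have hinj : ∀ (a b : ℤˣ) (ε ε' : Fin n → ℤˣ),
      (Fin.cons a ε : Fin (n + 1) → ℤˣ) = Fin.cons b ε' → a = b ∧ ε = ε' :=
    fun a b ε ε' h => Fin.cons_injective2 h
  rw [← Nat.card_sum]
  refine Nat.card_le_card_of_injective (Sum.elim
    (fun ε => (⟨_, hres (-1) ε⟩ : regions (fun i w => ω i w))) (fun ε => ⟨_, hs1 ε⟩)) ?_
  rintro (ε | ε) (ε' | ε') h
  · have := hinj _ _ _ _ (Subtype.ext_iff.1 h)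
    rw [Subtype.ext this.2]
  · have h3 := hinj _ _ _ _ (Subtype.ext_iff.1 h)
    exact absurd (h3.2 ▸ hres 1 ε) (hs2 ε' h3.1.symm)
  · have h3 := hinj _ _ _ _ (Subtype.ext_iff.1 h)
    exact absurd (h3.2 ▸ hres 1 ε') (hs2 ε h3.1)
  · have := hinj _ _ _ _ (Subtype.ext_iff.1 h)
    rw [Subtype.ext this.2]

/-- Deletion and restriction for `B`: the elements `p(e)` and `e₀ q(e)` span `B(𝒜)`, where `p, q` are
polynomials in the generators other than `e₀`. The first ones form a quotient of `B` of the
deletion, and modulo these the second ones form a quotient of `B` of the restriction: if a sign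
pattern on `S` does not occur on `H₀`, it does not occur on one of the sides of `H₀`, and the
relation on `S ∪ {0}` which this provides expresses `e₀ * bdrySum ε y S` as `± e_S`. -/
lemma rank_le_del_add_res {n : ℕ} (ω : Fin (n + 1) → W →ᵃ[ℝ] ℝ) {p : W} (hp : ω 0 p = 0) :
    Module.rank ℚ (ArrAlg (fun i w => ω i w)) ≤
      Module.rank ℚ (ArrAlg (fun (i : Fin n) v => ω i.succ (hypParam (ω 0).linear p v))) +
      Module.rank ℚ (ArrAlg (fun (i : Fin n) w => ω i.succ w)) := by
  set B := ArrAlg (fun i w => ω i w)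
  set e : Fin (n + 1) → B := arrGen (fun i w => ω i w) with he
  have hsat : SatRel 1 (fun i w => ω i w) e := satRel_arrGen _
  set y : Fin n → B := fun i => e i.succ with hy
  have hdel : SatRel 1 (fun (i : Fin n) w => ω i.succ w) y := hsat.comp (Fin.succEmb n)
  have hsq0 : e 0 ^ 2 = 0 := by simpa using hsat.sq 0
  have hgen : Algebra.adjoin ℚ (insert (e 0) (Set.range y)) = ⊤ := by
    rw [← adjoin_arrGen, ← he]
    congr 1
    exact (Fin.range_fin_succ e).symm
  set N : Subalgebra ℚ B := (aeval (R := ℚ) y).range with hN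
  have hyN : ∀ i, y i ∈ N := fun i => ⟨X i, aeval_X _ _⟩
  let J : Ideal (MvPolynomial (Fin n) ℚ) :=
    { carrier := {q | e 0 * aeval y q ∈ N}
      add_mem' := fun {a b} ha hb => by
        simp only [Set.mem_ofPred_eq, map_add, mul_add] at ha hb ⊢
        exact N.add_mem ha hb
      zero_mem' := by simp
      smul_mem' := fun c q hq => by
        simp only [Set.mem_ofPred_eq, smul_eq_mul, map_mul] at hq ⊢
        rw [mul_left_comm]
        exact N.mul_mem ⟨c, rfl⟩ hq }
  have hJ : ∀ q, q ∈ J ↔ e 0 * aeval y q ∈ N := fun q => Iff.rfl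
  have hsatJ : SatRel 1 (fun (i : Fin n) v => ω i.succ (hypParam (ω 0).linear p v))
      (fun i => Ideal.Quotient.mk J (X i)) := by
    refine ⟨fun i => ?_, fun S hS => ?_, fun S ε h1 h2 => ?_⟩
    · rw [one_mul, ← map_pow, Ideal.Quotient.eq_zero_iff_mem, hJ, map_pow, aeval_X]
      have : y i ^ 2 = 0 := by simpa using hdel.sq i
      rw [this, mul_zero]
      exact N.zero_mem
    · rw [one_mul, ← map_prod, Ideal.Quotient.eq_zero_iff_mem, hJ, map_prod]
      simp only [aeval_X]
      have := hsat.empty (insert 0 (S.map (Fin.succEmb n))) (by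
        intro w
        by_contra! hw
        obtain ⟨v, rfl⟩ := exists_hypParam (ω 0) hp (hw 0 (Finset.mem_insert_self _ _))
        obtain ⟨i, hi, hne⟩ := hS v
        exact hne (hw i.succ (Finset.mem_insert_of_mem
          (Finset.mem_map_of_mem (Fin.succEmb n) hi))))
      rw [one_mul, Finset.prod_insert (by simp), Finset.prod_map] at this
      have h2 : e 0 * ∏ i ∈ S, y i = 0 := this
      rw [h2]
      exact N.zero_mem
    · rw [one_mul, ← map_bdrySum, Ideal.Quotient.eq_zero_iff_mem, hJ, map_bdrySum]
      simp only [aeval_X]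
      obtain ⟨s, hs⟩ := exists_side S (fun i : Fin n => ω i.succ) (ω 0) ε (by
        intro w hw
        obtain ⟨v, rfl⟩ := exists_hypParam (ω 0) hp hw
        exact h1 v)
      have := hsat.circ (insert 0 (S.map (Fin.succEmb n))) (Fin.cons s ε) (by
        intro w
        rcases hs w with h | ⟨i, hi, h⟩
        · exact ⟨0, Finset.mem_insert_self _ _, by simpa using h⟩
        · exact ⟨i.succ, Finset.mem_insert_of_mem (Finset.mem_map_of_mem (Fin.succEmb n) hi),
            by simpa using h⟩) (by
        obtain ⟨v, hv⟩ := h2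
        refine ⟨hypParam (ω 0).linear p v, fun i hi => ?_⟩
        rw [Finset.mem_insert, Finset.mem_map] at hi
        rcases hi with rfl | ⟨j, hj, rfl⟩
        · exact apply_hypParam _ hp v
        · exact hv j hj)
      rw [one_mul, bdrySum_insert _ _ (by simp), Finset.prod_map, bdrySum_map] at this
      have h3 : e 0 * bdrySum ε y S = -(((s : ℤ) : B) * ∏ i ∈ S, y i) := by
        have h4 : ((s : ℤ) : B) * ∏ i ∈ S, y i + e 0 * bdrySum ε y S = 0 := this
        linear_combination h4
      rw [h3]
      exact N.neg_mem (N.mul_mem (intCast_mem N _) (N.prod_mem fun i _ => hyN i))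
  have hJle : ∀ q ∈ arrIdeal (fun (i : Fin n) v => ω i.succ (hypParam (ω 0).linear p v)),
      e 0 * aeval y q ∈ N :=
    fun q hq => (hJ q).1 (arrIdeal_le hsatJ hq)
  let N' : Submodule ℚ B := Subalgebra.toSubmodule N
  let τ : ArrAlg (fun (i : Fin n) v => ω i.succ (hypParam (ω 0).linear p v)) →ₗ[ℚ] B ⧸ N' :=
    Submodule.liftQ ((arrIdeal _).restrictScalars ℚ)
      (N'.mkQ.comp ((LinearMap.mulLeft ℚ (e 0)).comp (aeval y).toLinearMap))
      (fun q hq => (Submodule.Quotient.mk_eq_zero N').2 (hJle q hq))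
  have hτ : Function.Surjective τ := by
    intro a
    obtain ⟨a, rfl⟩ := Submodule.mkQ_surjective _ a
    obtain ⟨p₁, b, rfl⟩ := exists_aeval_add_mul (e 0) y hgen a
    obtain ⟨p₂, c, rfl⟩ := exists_aeval_add_mul (e 0) y hgen b
    refine ⟨Ideal.Quotient.mk _ p₂, ?_⟩
    have h1 : τ (Ideal.Quotient.mk _ p₂) = N'.mkQ (e 0 * aeval y p₂) := rfl
    rw [h1, ← sub_eq_zero, ← map_sub, Submodule.mkQ_apply, Submodule.Quotient.mk_eq_zero]
    have h2 : e 0 * aeval y p₂ - (aeval y p₁ + e 0 * (aeval y p₂ + e 0 * c)) = -aeval y p₁ := by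
      linear_combination (-c) * hsq0
    rw [h2]
    exact N.neg_mem ⟨p₁, rfl⟩
  rw [← Submodule.rank_quotient_add_rank N']
  refine add_le_add (LinearMap.rank_le_of_surjective τ hτ) ?_
  have hle : N' ≤ LinearMap.range hdel.hom.toLinearMap := by
    rintro _ ⟨q, rfl⟩
    exact ⟨Ideal.Quotient.mk _ q, hdel.hom_mk q⟩
  exact (Submodule.rank_mono hle).trans (rank_range_le _)

/-- Induction by deletion and restriction. The restriction is again an arrangement of hyperplanes
unless `H₀` is empty or equals another hyperplane; in these cases `e₀` is redundant. -/
theorem rank_le_card_regions (n : ℕ) : ∀ {W : Type*} [AddCommGroup W] [Module ℝ W]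
    (ω : Fin n → W →ᵃ[ℝ] ℝ), (∀ i, ∃ w, ω i w ≠ 0) →
    Module.rank ℚ (ArrAlg (fun i w => ω i w)) ≤
      (Nat.card (regions (fun i w => ω i w)) : Cardinal) := by
  induction n with
  | zero =>
    intro W _ _ ω _
    have h1 : Module.rank ℚ (ArrAlg (fun i w => ω i w)) ≤ Module.rank ℚ ℚ := by
      refine LinearMap.rank_le_of_surjective (Algebra.linearMap ℚ _) ?_
      intro a
      obtain ⟨q, rfl⟩ := Ideal.Quotient.mk_surjective a
      rw [MvPolynomial.eq_C_of_isEmpty q]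
      exact ⟨_, rfl⟩
    have h2 : 0 < Nat.card (regions (fun i w => ω i w)) := by
      have : Nonempty (regions (fun i w => ω i w)) := ⟨⟨Fin.elim0, 0, fun i => i.elim0⟩⟩
      exact Nat.card_pos
    refine h1.trans ?_
    rw [Module.rank_self]
    exact_mod_cast h2
  | succ n ih =>
    intro W _ _ ω hω
    have ih1 := ih (fun i => ω i.succ) (fun i => hω i.succ)
    have hsat := satRel_arrGen (fun i w => ω i w)
    by_cases hp : ∃ p, ω 0 p = 0
    · obtain ⟨p, hp⟩ := hp
      by_cases hpar : ∃ i : Fin n, ∀ w, ω 0 w = 0 → ω i.succ w = 0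
      -- `H i` contains, hence equals, `H₀`; then `e₀ = ± e_i`.
      · obtain ⟨i, hi⟩ := hpar
        refine rank_le_of_redundant ω ih1 ?_ (fun w hw h0 => hw i (hi w h0))
        obtain ⟨s, hs⟩ := exists_side {i} (fun i : Fin n => ω i.succ) (ω 0) 1
          (fun w hw => ⟨i, by simp, by simp [hi w hw]⟩)
        have := hsat.circ (insert 0 (({i} : Finset (Fin n)).map (Fin.succEmb n))) (Fin.cons s 1) (by
          intro w
          rcases hs w with h | ⟨j, hj, h⟩
          · exact ⟨0, Finset.mem_insert_self _ _, by simpa using h⟩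
          · exact ⟨j.succ, Finset.mem_insert_of_mem (Finset.mem_map_of_mem (Fin.succEmb n) hj),
              by simpa using h⟩) ⟨p, by simp [hp, hi p hp]⟩
        rw [one_mul, bdrySum_insert _ _ (by simp [(Fin.succ_ne_zero i).symm]), Finset.prod_map,
          bdrySum_map] at this
        simp [bdrySum] at this
        refine ⟨-((s : ℤ) : MvPolynomial (Fin n) ℚ) * X i, ?_⟩
        rw [map_mul, map_neg, map_intCast, aeval_X]
        linear_combination this
      · push Not at hpar
        have ih2 := ih (fun i => (ω i.succ).comp (hypParam (ω 0).linear p)) (fun i => by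
          obtain ⟨w, hw, hne⟩ := hpar i
          obtain ⟨v, rfl⟩ := exists_hypParam (ω 0) hp hw
          exact ⟨v, hne⟩)
        refine (rank_le_del_add_res ω hp).trans ((add_le_add ih2 ih1).trans ?_)
        exact_mod_cast card_regions_ge ω (hω 0) hp
    · push Not at hp
      refine rank_le_of_redundant ω ih1 ⟨0, ?_⟩ (fun w _ => hp w)
      have := hsat.empty {0} (fun w => ⟨0, by simp, hp w⟩)
      simpa using this

end UpperBound

/-! ### Lower bound: for central arrangements `B` is at least as large as the number of regions -/

section LowerBound

variable {κ A W : Type*} [CommRing A] [Algebra ℚ A]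

/-- The subspace of `A` spanned by the monomials of degree less than `d` in the `x i`. -/
def degFilt (x : κ → A) (d : ℤ) : Submodule ℚ A :=
  Submodule.span ℚ {a | ∃ m : κ →₀ ℕ, (m.degree : ℤ) < d ∧ a = m.prod fun i k => x i ^ k}

lemma degFilt_mono (x : κ → A) {d d' : ℤ} (h : d ≤ d') : degFilt x d ≤ degFilt x d' := by
  apply Submodule.span_mono
  rintro a ⟨m, hm, rfl⟩
  exact ⟨m, hm.trans_le h, rfl⟩

lemma one_mem_degFilt (x : κ → A) {d : ℤ} (h : 0 < d) : (1 : A) ∈ degFilt x d :=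
  Submodule.subset_span ⟨0, by simpa using h, by simp⟩

lemma mul_mem_degFilt (x : κ → A) (i : κ) {d : ℤ} {a : A} (h : a ∈ degFilt x d) :
    x i * a ∈ degFilt x (d + 1) := by
  classical
  induction h using Submodule.span_induction with
  | zero => simp
  | add a b _ _ ha hb => rw [mul_add]; exact Submodule.add_mem _ ha hb
  | smul r a _ ha => rw [mul_smul_comm]; exact Submodule.smul_mem _ _ ha
  | mem a ha =>
    obtain ⟨m, hm, rfl⟩ := ha
    refine Submodule.subset_span ⟨Finsupp.single i 1 + m, ?_, ?_⟩
    · rw [map_add, Finsupp.degree_single]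
      push_cast
      linarith
    · rw [Finsupp.prod_add_index' (by simp) (fun _ _ _ => pow_add _ _ _),
        Finsupp.prod_single_index (by simp), pow_one]

lemma intUnit_mul_mem {N : Submodule ℚ A} {a : A} (u : ℤˣ) (h : a ∈ N) :
    ((u : ℤ) : A) * a ∈ N := by
  rcases Int.units_eq_one_or u with rfl | rfl <;> simpa using h

/-- The three leading layers of the product `∏_{i ∈ S} (x_i + ε_i)`: it is `∏ x_i`, plus the boundary
sum, plus terms of degree at most `|S| - 2`. -/
lemma prod_add_sign_mem [DecidableEq κ] (x : κ → A) (ε : κ → ℤˣ) (S : Finset κ) :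
    ∏ i ∈ S, (x i + ((ε i : ℤ) : A)) ∈ degFilt x (S.card + 1) ∧
    ∏ i ∈ S, (x i + ((ε i : ℤ) : A)) - ∏ i ∈ S, x i ∈ degFilt x S.card ∧
    ∏ i ∈ S, (x i + ((ε i : ℤ) : A)) - ∏ i ∈ S, x i - bdrySum ε x S
      ∈ degFilt x (S.card - 1) := by
  induction S using Finset.induction_on with
  | empty =>
    refine ⟨?_, ?_, ?_⟩
    · simpa using one_mem_degFilt x one_pos
    · simp
    · simp [bdrySum]
  | insert a S ha ih =>
    obtain ⟨h0, h1, h2⟩ := ih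
    rw [Finset.prod_insert ha, Finset.prod_insert ha, bdrySum_insert ε x ha,
      Finset.card_insert_of_notMem ha]
    push_cast
    set P := ∏ i ∈ S, (x i + ((ε i : ℤ) : A))
    set Q := ∏ i ∈ S, x i
    refine ⟨?_, ?_, ?_⟩
    · rw [add_mul]
      exact Submodule.add_mem _ (mul_mem_degFilt x a h0)
        (intUnit_mul_mem _ (degFilt_mono x (by linarith) h0))
    · have : (x a + ((ε a : ℤ) : A)) * P - x a * Q = x a * (P - Q) + ((ε a : ℤ) : A) * P := by
        ring
      rw [this]
      exact Submodule.add_mem _ (mul_mem_degFilt x a h1) (intUnit_mul_mem _ h0)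
    · have : (x a + ((ε a : ℤ) : A)) * P - x a * Q -
          (((ε a : ℤ) : A) * Q + x a * bdrySum ε x S) =
          x a * (P - Q - bdrySum ε x S) + ((ε a : ℤ) : A) * (P - Q) := by
        ring
      rw [this]
      exact Submodule.add_mem _ (degFilt_mono x (by linarith) (mul_mem_degFilt x a h2))
        (intUnit_mul_mem _ (degFilt_mono x (by linarith) h1))

/-- The algebra map `X i ↦ x i * T`; the coefficient of `T ^ d` of the image of `p` is the value at
`x` of the homogeneous component of `p` of degree `d`. -/
noncomputable def gradedEval (x : κ → A) : MvPolynomial κ ℚ →ₐ[ℚ] Polynomial A :=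
  aeval (fun i => Polynomial.C (x i) * Polynomial.X)

lemma gradedEval_X (x : κ → A) (i : κ) :
    gradedEval x (X i) = Polynomial.C (x i) * Polynomial.X := aeval_X _ _

lemma gradedEval_monomial (x : κ → A) (m : κ →₀ ℕ) :
    gradedEval x (monomial m 1) =
      Polynomial.C (m.prod fun i k => x i ^ k) * Polynomial.X ^ m.degree := by
  rw [gradedEval, aeval_monomial, map_one, one_mul]
  simp only [Finsupp.prod, mul_pow, Finset.prod_mul_distrib, Finset.prod_pow_eq_pow_sum, map_prod,
    map_pow]
  rfl

/-- The polynomials whose homogeneous components all drop in degree when evaluated at `x`. -/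
noncomputable def dropIdeal (x : κ → A) : Ideal (MvPolynomial κ ℚ) where
  carrier := {p | ∀ d : ℕ, (gradedEval x p).coeff d ∈ degFilt x d}
  add_mem' := fun {a b} ha hb d => by
    rw [map_add, Polynomial.coeff_add]; exact Submodule.add_mem _ (ha d) (hb d)
  zero_mem' := fun d => by simp
  smul_mem' := fun c q hq => by
    simp only [Set.mem_ofPred_eq, smul_eq_mul] at hq ⊢
    induction c using MvPolynomial.induction_on with
    | C a =>
      intro d
      rw [← smul_eq_C_mul, map_smul, Polynomial.coeff_smul]
      exact Submodule.smul_mem _ _ (hq d)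
    | add p r hp hr =>
      intro d
      rw [add_mul, map_add, Polynomial.coeff_add]
      exact Submodule.add_mem _ (hp d) (hr d)
    | mul_X p i hp =>
      intro d
      have : gradedEval x (p * X i * q) =
          Polynomial.C (x i) * gradedEval x (p * q) * Polynomial.X := by
        rw [map_mul, map_mul, map_mul, gradedEval_X]; ring
      rw [this]
      rcases d with _ | d
      · simp
      · rw [Polynomial.coeff_mul_X, Polynomial.coeff_C_mul]
        push_cast
        exact mul_mem_degFilt x i (hp d)

lemma mem_dropIdeal (x : κ → A) (p : MvPolynomial κ ℚ) :
    p ∈ dropIdeal x ↔ ∀ d : ℕ, (gradedEval x p).coeff d ∈ degFilt x d := Iff.rfl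

lemma gradedEval_bdrySum [DecidableEq κ] (x : κ → A) (ε : κ → ℤˣ) (S : Finset κ) :
    gradedEval x (bdrySum ε X S) =
      Polynomial.C (bdrySum ε x S) * Polynomial.X ^ (S.card - 1) := by
  rw [map_bdrySum]
  simp only [bdrySum, gradedEval_X, map_sum, map_mul, map_prod, map_intCast, Finset.sum_mul]
  refine Finset.sum_congr rfl fun k hk => ?_
  rw [Finset.prod_mul_distrib, Finset.prod_const, Finset.card_erase_of_mem hk, mul_assoc]

/-- The `±1`-valued coordinate functions on the set of regions. -/
def regionCoord (f : κ → W → ℝ) (i : κ) : regions f → ℚ := fun ε => ((ε.1 i : ℤ) : ℚ)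

lemma regionCoord_sq (f : κ → W → ℝ) (i : κ) : regionCoord f i ^ 2 = 1 := by
  ext ε
  rcases Int.units_eq_one_or (ε.1 i) with h | h <;> simp [regionCoord, h]

lemma prod_regionCoord_eq_zero {f : κ → W → ℝ} {S : Finset κ} {ε : κ → ℤˣ}
    (h : ∀ w, ∃ i ∈ S, ((ε i : ℤ) : ℝ) * f i w ≤ 0) :
    ∏ i ∈ S, (regionCoord f i + ((ε i : ℤ) : regions f → ℚ)) = 0 := by
  ext η
  obtain ⟨η, w, hw⟩ := η
  obtain ⟨i, hi, hle⟩ := h w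
  have hη := hw i
  rw [Finset.prod_apply]
  refine Finset.prod_eq_zero hi ?_
  rcases Int.units_eq_one_or (ε i) with h1 | h1 <;>
    rcases Int.units_eq_one_or (η i) with h2 | h2 <;>
    simp [h1, h2] at hle hη <;> first | linarith | simp [regionCoord, h1, h2]

lemma bdrySum_neg {A : Type*} [CommRing A] [DecidableEq κ] (ε : κ → ℤˣ) (x : κ → A)
    (S : Finset κ) :
    bdrySum (-ε) x S = -bdrySum ε x S := by
  simp [bdrySum, Finset.sum_neg_distrib]

/-- If the sign pattern `ε` on `S` occurs nowhere, neither does `-ε`, so that the functions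
`∏_{i ∈ S} (x_i + ε_i)` and `∏_{i ∈ S} (x_i - ε_i)` both vanish; their difference shows that the
boundary sum drops in degree. -/
lemma arrIdeal_le_dropIdeal [DecidableEq κ] [AddCommGroup W] [Module ℝ W]
    (f : κ → W →ₗ[ℝ] ℝ) :
    arrIdeal (fun i w => f i w) ≤ dropIdeal (regionCoord (fun i w => f i w)) := by
  set x := regionCoord (fun i w => f i w)
  apply arrIdeal_le
  refine ⟨fun i => ?_, fun S hS => ?_, fun S ε h1 _ => ?_⟩
  · rw [one_mul, ← map_pow, Ideal.Quotient.eq_zero_iff_mem, mem_dropIdeal]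
    intro d
    rw [map_pow, gradedEval_X, mul_pow, ← Polynomial.C_pow, Polynomial.coeff_C_mul,
      Polynomial.coeff_X_pow, regionCoord_sq]
    split_ifs with hd
    · subst hd
      simpa using one_mem_degFilt x two_pos
    · simp
  · obtain ⟨i, _, hi⟩ := hS 0
    simp at hi
  · rw [one_mul, ← map_bdrySum, Ideal.Quotient.eq_zero_iff_mem, mem_dropIdeal]
    intro d
    rw [gradedEval_bdrySum, Polynomial.coeff_C_mul, Polynomial.coeff_X_pow]
    split_ifs with hd
    · subst hd
      rw [mul_one]
      refine degFilt_mono x (d := S.card - 1) (by omega) ?_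
      have h2 := (prod_add_sign_mem x ε S).2.2
      have h3 := (prod_add_sign_mem x (-ε) S).2.2
      rw [prod_regionCoord_eq_zero h1] at h2
      rw [prod_regionCoord_eq_zero (fun w => by
        obtain ⟨i, hi, hle⟩ := h1 (-w)
        exact ⟨i, hi, by simpa using hle⟩), bdrySum_neg] at h3
      have h4 := Submodule.smul_mem _ (2⁻¹ : ℚ) (Submodule.sub_mem _ h3 h2)
      have h5 : (2⁻¹ : ℚ) • (0 - ∏ i ∈ S, x i - -bdrySum ε x S -
          (0 - ∏ i ∈ S, x i - bdrySum ε x S)) = bdrySum ε x S := by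
        have : (0 - ∏ i ∈ S, x i - -bdrySum ε x S - (0 - ∏ i ∈ S, x i - bdrySum ε x S)) =
            (2 : ℚ) • bdrySum ε x S := by
          rw [two_smul]; ring
        rw [this, smul_smul]; norm_num
      rwa [h5] at h4
    · simp

lemma degFilt_regionCoord_eq_top [Fintype κ] (f : κ → W → ℝ) :
    degFilt (regionCoord f) (Fintype.card κ + 1) = ⊤ := by
  classical
  rw [eq_top_iff]
  intro g _
  rw [pi_eq_sum_univ' g]
  refine Submodule.sum_mem _ fun η _ => Submodule.smul_mem _ _ ?_
  have h1 := (prod_add_sign_mem (regionCoord f) η.1 Finset.univ).1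
  rw [Finset.card_univ] at h1
  have h2 : (Pi.single η 1 : regions f → ℚ) = (∏ i, (2 * ((η.1 i : ℤ) : ℚ)))⁻¹ •
      ∏ i, (regionCoord f i + ((η.1 i : ℤ) : regions f → ℚ)) := by
    ext η'
    rw [Pi.smul_apply, Finset.prod_apply, smul_eq_mul]
    by_cases h : η' = η
    · subst h
      rw [Pi.single_eq_same, eq_comm]
      have h3 : ∀ i, (regionCoord f i + ((η'.1 i : ℤ) : regions f → ℚ)) η' =
          2 * ((η'.1 i : ℤ) : ℚ) := fun i => by
        simp [regionCoord, two_mul]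
      simp only [h3]
      apply inv_mul_cancel₀
      rw [Finset.prod_ne_zero_iff]
      intro i _
      rcases Int.units_eq_one_or (η'.1 i) with h4 | h4 <;> simp [h4]
    · rw [Pi.single_eq_of_ne h]
      obtain ⟨i, hi⟩ : ∃ i, η'.1 i ≠ η.1 i := by
        by_contra! hc
        exact h (Subtype.ext (funext hc))
      refine (mul_eq_zero_of_right _ (Finset.prod_eq_zero (Finset.mem_univ i) ?_)).symm
      rcases Int.units_eq_one_or (η'.1 i) with h4 | h4 <;>
        rcases Int.units_eq_one_or (η.1 i) with h5 | h5 <;>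
        first | exact absurd (h4.trans h5.symm) hi | simp [regionCoord, h4, h5]
  rw [h2]
  exact Submodule.smul_mem _ _ h1

/-- With projections `π_d` of kernel `degFilt x d`, the map `p ↦ ∑_d π_d (p_d(x))`, where `p_d` is the
homogeneous component of degree `d`, kills the ideal of `B` and is onto the functions on the
regions, as one sees by induction along the degree filtration. -/
theorem card_regions_le_rank {κ : Type} [DecidableEq κ] [Fintype κ] [AddCommGroup W] [Module ℝ W]
    (f : κ → W →ₗ[ℝ] ℝ) :
    (Nat.card (regions fun i w => f i w) : Cardinal) ≤
      Module.rank ℚ (ArrAlg fun i w => f i w) := by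
  classical
  set F : κ → W → ℝ := fun i w => f i w
  set x := regionCoord F with hx
  have hπ : ∀ d : ℕ, ∃ π : (regions F → ℚ) →ₗ[ℚ] (regions F → ℚ),
      (∀ u ∈ degFilt x d, π u = 0) ∧ ∀ u, u - π u ∈ degFilt x d := fun d => by
    obtain ⟨g, hg⟩ := (degFilt x d).subtype.exists_leftInverse_of_injective
      (Submodule.ker_subtype _)
    refine ⟨LinearMap.id - (degFilt x d).subtype ∘ₗ g, fun u hu => ?_, fun u => ?_⟩
    · have := LinearMap.congr_fun hg ⟨u, hu⟩
      simp at this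
      simp [this]
    · simp
  choose π hπ0 hπ1 using hπ
  set N := Fintype.card κ + 1 with hN
  let Γ : MvPolynomial κ ℚ →ₗ[ℚ] (regions F → ℚ) :=
    ∑ d ∈ Finset.range N,
      π d ∘ₗ (Polynomial.lcoeff (regions F → ℚ) d).restrictScalars ℚ ∘ₗ (gradedEval x).toLinearMap
  have hΓ : ∀ p, Γ p = ∑ d ∈ Finset.range N, π d ((gradedEval x p).coeff d) := fun p => by
    simp [Γ, LinearMap.sum_apply]
  have hker : (arrIdeal F).restrictScalars ℚ ≤ LinearMap.ker Γ := fun p hp => by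
    rw [LinearMap.mem_ker, hΓ]
    exact Finset.sum_eq_zero fun d _ =>
      hπ0 d _ ((mem_dropIdeal x p).1 (arrIdeal_le_dropIdeal f hp) d)
  have hstep : ∀ d : ℕ, d ≤ N → degFilt x d ≤ LinearMap.range Γ := by
    intro d
    induction d with
    | zero =>
      intro _
      refine Submodule.span_le.2 ?_
      rintro a ⟨m, hm, rfl⟩
      simp at hm
      omega
    | succ d ih =>
      intro hd
      refine Submodule.span_le.2 ?_
      rintro a ⟨m, hm, rfl⟩
      have ih' := ih (by omega)
      by_cases hmd : m.degree < d
      · exact ih' (Submodule.subset_span ⟨m, by exact_mod_cast hmd, rfl⟩)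
      · have hmd' : m.degree = d := by push_cast at hm; omega
        have h1 : Γ (monomial m 1) = π d (m.prod fun i k => x i ^ k) := by
          rw [hΓ, Finset.sum_eq_single d]
          · rw [gradedEval_monomial, hmd', Polynomial.coeff_C_mul_X_pow, if_pos rfl]
          · intro b _ hb
            rw [gradedEval_monomial, hmd', Polynomial.coeff_C_mul_X_pow, if_neg hb, map_zero]
          · intro h
            exact absurd (Finset.mem_range.2 (by omega)) h
        have h2 := Submodule.add_mem _ (ih' (hπ1 d (m.prod fun i k => x i ^ k)))
          (LinearMap.mem_range_self Γ (monomial m 1))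
        rw [h1, sub_add_cancel] at h2
        exact h2
  have hsurj : Function.Surjective
      (Submodule.liftQ ((arrIdeal F).restrictScalars ℚ) Γ hker) := by
    rw [← LinearMap.range_eq_top, Submodule.range_liftQ, eq_top_iff]
    refine le_trans ?_ (hstep N le_rfl)
    rw [hN]
    push_cast
    rw [hx, degFilt_regionCoord_eq_top]
  have h := LinearMap.rank_le_of_surjective _ hsurj
  have hfin : Fintype (regions F) := Fintype.ofFinite _
  rwa [rank_fun', ← Nat.card_eq_fintype_card] at h

end LowerBound

/-! ### Exactness -/

section Exactness

variable {W : Type*} [NormedAddCommGroup W] [NormedSpace ℝ W] {n : ℕ}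

/-- Every region of `𝒜` gives two regions of the cone: the one over it at height `1` and its
antipode. -/
lemma two_mul_card_regions_le (ω : Fin n → W →ᵃ[ℝ] ℝ) :
    2 * Nat.card (regions fun i w => ω i w) ≤
      Nat.card (regions fun j q => coneForm ω j q) := by
  let g : regions (fun i w => ω i w) ⊕ regions (fun i w => ω i w) →
      regions (fun j q => coneForm ω j q) := fun a => match a with
    | .inl ε => ⟨fun j => j.elim (-1) ε.1, by
        obtain ⟨ε, w, hw⟩ := ε
        refine ⟨(w, 1), fun j => ?_⟩
        rcases j with _ | i
        · simp [coneForm_none]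
        · simpa [coneForm_some_one] using hw i⟩
    | .inr ε => ⟨fun j => j.elim 1 (-ε.1), by
        obtain ⟨ε, w, hw⟩ := ε
        refine ⟨-(w, 1), fun j => ?_⟩
        change 0 < _ * coneForm ω j (-(w, 1))
        rw [map_neg]
        rcases j with _ | i
        · simp [coneForm_none]
        · simpa [coneForm_some_one] using hw i⟩
  have hg : Function.Injective g := by
    rintro (⟨ε, hε⟩ | ⟨ε, hε⟩) (⟨η, hη⟩ | ⟨η, hη⟩) h
    · have h1 : ε = η := funext fun i => congrFun (congrArg Subtype.val h) (some i)
      subst h1; rfl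
    · exact absurd (congrFun (congrArg Subtype.val h) none)
        (show (-1 : ℤˣ) ≠ 1 by decide)
    · exact absurd (congrFun (congrArg Subtype.val h) none)
        (show (1 : ℤˣ) ≠ -1 by decide)
    · have h1 : ε = η := funext fun i =>
        neg_injective (congrFun (congrArg Subtype.val h) (some i))
      subst h1; rfl
  have := Nat.card_le_card_of_injective g hg
  rwa [Nat.card_sum, ← two_mul] at this

end Exactness

/-- The algebra map `φ : B(c𝒜) → B(𝒜)` with `e_{cHᵢ} ↦ e_{Hᵢ}`,
`e_{cH₀} ↦ 0` is well defined, the linear map `t : B(𝒜) → B(c𝒜)` with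
`e_S ↦ e_{cH₀}·e_{cS}` on monomials is well defined, and
`0 → B(𝒜) →ᵗ B(c𝒜) →^φ B(𝒜) → 0` is exact. -/
theorem bAlg_cone_exact_sequence {n : ℕ} (ω : Fin n → V →ᵃ[ℝ] ℝ)
    (hω : ∀ i, (ω i).linear ≠ 0) :
    ∃ φ : BAlg (cHyp ω) (cHplus ω) (cHminus ω) →ₐ[ℚ]
        BAlg (Hyp ω) (Hplus ω) (Hminus ω),
      (∀ i : Fin n,
          φ (Ideal.Quotient.mk (bIdeal (cHyp ω) (cHplus ω) (cHminus ω)) (X (some i))) =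
            Ideal.Quotient.mk (bIdeal (Hyp ω) (Hplus ω) (Hminus ω)) (X i)) ∧
      φ (Ideal.Quotient.mk (bIdeal (cHyp ω) (cHplus ω) (cHminus ω)) (X none)) = 0 ∧
      ∃ t : BAlg (Hyp ω) (Hplus ω) (Hminus ω) →ₗ[ℚ]
          BAlg (cHyp ω) (cHplus ω) (cHminus ω),
        (∀ S : Finset (Fin n),
            t (Ideal.Quotient.mk (bIdeal (Hyp ω) (Hplus ω) (Hminus ω)) (∏ i ∈ S, X i)) =
              Ideal.Quotient.mk (bIdeal (cHyp ω) (cHplus ω) (cHminus ω))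
                (X none * ∏ i ∈ S, X (some i))) ∧
        Function.Injective t ∧
        LinearMap.range t = LinearMap.ker φ.toLinearMap ∧
        Function.Surjective φ := by
  let f : Fin n → V → ℝ := fun i w => ω i w
  let cf : Option (Fin n) → V × ℝ → ℝ := fun j q => coneForm ω j q
  have hc : SatRel 1 cf (arrGen cf) := satRel_arrGen cf
  have hφ : SatRel 1 cf (fun j => j.elim 0 (arrGen f)) := satRel_phi rfl (satRel_arrGen f)
  have ht : SatRel (arrGen cf none) f (fun i => arrGen cf (some i)) := satRel_t hc
  have hφ_some : ∀ i, hφ.hom (arrGen cf (some i)) = arrGen f i := fun i => by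
    rw [arrGen, hφ.hom_mk, aeval_X]; rfl
  have hφ_none : hφ.hom (arrGen cf none) = 0 := by
    rw [arrGen, hφ.hom_mk, aeval_X]; rfl
  have hsurj : Function.Surjective hφ.hom := by
    rw [← AlgHom.range_eq_top, eq_top_iff, ← adjoin_arrGen f, Algebra.adjoin_le_iff]
    rintro _ ⟨i, rfl⟩
    exact ⟨_, hφ_some i⟩
  have hgen : Algebra.adjoin ℚ
      (insert (arrGen cf none) (Set.range fun i => arrGen cf (some i))) = ⊤ := by
    rw [eq_top_iff, ← adjoin_arrGen cf]
    refine Algebra.adjoin_mono ?_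
    rintro _ ⟨_ | i, rfl⟩
    · exact Or.inl rfl
    · exact Or.inr ⟨i, rfl⟩
  have hspan := ht.mem_range_lin (by simpa using hc.sq none) hgen
  -- The map `ψ : B(𝒜) → B(c𝒜) / (e₀)` inverse to the one induced by `φ`.
  let J : Ideal (ArrAlg cf) := Ideal.span {arrGen cf none}
  have hJ : SatRel 1 cf (fun j => Ideal.Quotient.mk J (arrGen cf j)) :=
    SatRel.map (A' := ArrAlg cf ⧸ J) hc (Ideal.Quotient.mk J)
  have hψ : SatRel 1 f (fun i => Ideal.Quotient.mk J (arrGen cf (some i))) :=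
    satRel_of_none_eq_zero (y := fun j => Ideal.Quotient.mk J (arrGen cf j)) hJ
      (Ideal.Quotient.eq_zero_iff_mem.2 (Ideal.mem_span_singleton_self _))
  have hψφ : hψ.hom.comp hφ.hom = Ideal.Quotient.mkₐ ℚ J := by
    apply AlgHom.ext_of_adjoin_eq_top (adjoin_arrGen cf)
    rintro _ ⟨_ | i, rfl⟩
    · rw [AlgHom.comp_apply, hφ_none, map_zero]
      exact (Ideal.Quotient.eq_zero_iff_mem.2 (Ideal.mem_span_singleton_self _)).symm
    · rw [AlgHom.comp_apply, hφ_some, arrGen, hψ.hom_mk, aeval_X]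
      rfl
  have hrange : LinearMap.range ht.lin = LinearMap.ker hφ.hom.toLinearMap := by
    ext a
    rw [hspan, LinearMap.mem_ker, AlgHom.toLinearMap_apply]
    constructor
    · intro ha
      obtain ⟨b, rfl⟩ := Ideal.mem_span_singleton.1 ha
      rw [map_mul, hφ_none, zero_mul]
    · intro ha
      have h1 := DFunLike.congr_fun hψφ a
      rw [AlgHom.comp_apply, ha, map_zero] at h1
      exact Ideal.Quotient.eq_zero_iff_mem.1 h1.symm
  -- `dim (range t) = dim B(c𝒜) - dim B(𝒜) ≥ 2 r - r ≥ dim B(𝒜)`, with `r` the number of regions.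
  have hinj : Function.Injective ht.lin := by
    have hup : Module.rank ℚ (ArrAlg f) ≤ (Nat.card (regions f) : Cardinal) :=
      rank_le_card_regions n ω fun i => by
        by_contra! h
        refine hω i (LinearMap.ext fun v => ?_)
        have h1 := affine_apply_eq (ω i) v
        rw [h, h, add_zero] at h1
        simpa using h1.symm
    have hlow : (Nat.card (regions cf) : Cardinal) ≤ Module.rank ℚ (ArrAlg cf) :=
      card_regions_le_rank (coneForm ω)
    have hcount : 2 * Nat.card (regions f) ≤ Nat.card (regions cf) := two_mul_card_regions_le ω
    have hfin : Module.Finite ℚ (ArrAlg f) :=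
      Module.rank_lt_aleph0_iff.1 (hup.trans_lt (Cardinal.natCast_lt_aleph0))
    have hfinq : Module.Finite ℚ (ArrAlg cf ⧸ LinearMap.ker hφ.hom.toLinearMap) :=
      Module.Finite.equiv hφ.hom.toLinearMap.quotKerEquivRange.symm
    have hfink : Module.Finite ℚ (LinearMap.ker hφ.hom.toLinearMap) := by
      rw [← hrange]; infer_instance
    have hfinc : Module.Finite ℚ (ArrAlg cf) :=
      Module.Finite.of_submodule_quotient (LinearMap.ker hφ.hom.toLinearMap)
    rw [← Module.finrank_eq_rank, Nat.cast_le] at hup hlow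
    have h1 := LinearMap.finrank_range_add_finrank_ker hφ.hom.toLinearMap
    have h2 := LinearMap.finrank_range_add_finrank_ker ht.lin
    have h3 := Submodule.finrank_le (LinearMap.range hφ.hom.toLinearMap)
    rw [← hrange] at h1
    rw [← LinearMap.ker_eq_bot, ← Submodule.finrank_eq_zero (R := ℚ)]
    omega
  refine ⟨hφ.hom, hφ_some, hφ_none, ht.lin, fun S => ?_, hinj, hrange, hsurj⟩
  refine (ht.lin_mk _).trans ?_
  rw [map_mul, map_prod, map_prod]
  simp only [aeval_X]
  rfl
end
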